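/- Infinite-horizon consistency of stochastic dynamic programming: In the standing setting, suppose 𝒱 is a set of lsc functions 𝒳 → ℝ̄ satisfying Assumption 2, closed with respect to the Attouch–Wets distance dl, and suppose 𝐏_ν converges weakly to 𝐏, φ_ν epi-converges to φ and φ_ν converges pointwise to φ on 𝒳 × 𝒳 × Ξ. Suppose every epi-convergent sequence (V_ν)_ν with V_ν ∈ 𝒱 is equi-lsc and satisfies for each x̄ ∈ 𝒳: (i) liminf_{α→−∞} liminf_{(ν,x)→(∞,x̄)} ∫_Ξ b_ν(V_ν)(x,ξ) 1{b_ν(V_ν)(x,ξ) ≤ α} d𝐏_ν(ξ) = 0 and the functions b_ν(V_ν) are lsc on 𝒳 × Ξ and form an equi-lsc sequence; (ii) limsup_{α→∞} limsup_{ν→∞} ∫_Ξ b_ν(V_ν)(x̄,ξ) 1{b_ν(V_ν)(x̄,ξ) ≥ α} d𝐏_ν(ξ) = 0 and the functions b_ν(V_ν)(x̄,·) are usc on Ξ and form an equi-usc sequence. Then the outer limit (with respect to epi-convergence) of the sets {V ∈ 𝒱 : V = B_ν(V)} is contained in {V ∈ 𝒱 : V = B(V)}. If in addition 𝒱 is compact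 under dl and each B_ν has a fixed point V_ν = B_ν(V_ν) ∈ 𝒱, then every epi-convergence cluster point of (V_ν) lies in {V ∈ 𝒱 : V = B(V)}, and this set is nonempty. -/

import Mathlib

/-!
Along an epi-convergent sequence `V ν → W` in `𝒱`, equi-lower semicontinuity turns
epi-convergence into pointwise convergence. Compactness of `Y x ξ` then yields
`b_ν(V ν)(x,ξ) → b(W)(x,ξ)` for every `ξ`, and the equi-semicontinuity of the integrands upgrades
this to continuous convergence in `ξ`. Truncated at level `M`, the integrands are bounded, and
their integrals converge because, by the portmanteau theorem, the `P_ν`-mass of the set where they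
are still far from their limit vanishes; the tail conditions (i) and (ii) control the truncation
error uniformly in `ν`. Hence `B_ν(V ν)(x) → B(W)(x)`, and fixed points pass to the limit. The same
tail conditions keep the values `V ν x` of the fixed points bounded above, so `W` is not
identically `⊤`. As the Attouch–Wets distance metrizes epi-convergence, closedness of `𝒱` gives
`W ∈ 𝒱` and compactness gives the existence of cluster points.
-/

open Filter MeasureTheory Topology Set

noncomputable section

/-- Extended-real to extended-nonnegative-real (positive part). -/
def erealToENN (x : EReal) : ENNReal := if x = ⊤ then ⊤ else ENNReal.ofReal x.toReal

/-- Integral of an extended-real-valued function. -/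
def eintegral {Ω : Type*} [MeasurableSpace Ω] (P : Measure Ω) (g : Ω → EReal) : EReal :=
  ((∫⁻ ω, erealToENN (g ω) ∂P : ENNReal) : EReal) -
    ((∫⁻ ω, erealToENN (-(g ω)) ∂P : ENNReal) : EReal)

/-- Integrability of an extended-real-valued function. -/
def EIntegrable {Ω : Type*} [MeasurableSpace Ω] (P : Measure Ω) (g : Ω → EReal) : Prop :=
  AEMeasurable g P ∧ (∫⁻ ω, erealToENN (g ω) ∂P) < ⊤ ∧ (∫⁻ ω, erealToENN (-(g ω)) ∂P) < ⊤

/-- g·1{g ≤ α}. -/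
def truncBelow {Ω : Type*} (g : Ω → EReal) (α : ℝ) (ω : Ω) : EReal :=
  if g ω ≤ (α : EReal) then g ω else 0

/-- g·1{g ≥ α}. -/
def truncAbove {Ω : Type*} (g : Ω → EReal) (α : ℝ) (ω : Ω) : EReal :=
  if (α : EReal) ≤ g ω then g ω else 0

/-- Epi-convergence of a sequence of extended-real-valued functions on a set `Z`. -/
def EpiConvergesOn {E : Type*} [TopologicalSpace E] (Z : Set E)
    (F : ℕ → E → EReal) (f : E → EReal) : Prop :=
  ∀ z ∈ Z,
    (∀ zs : ℕ → E, (∀ ν, zs ν ∈ Z) → Tendsto zs atTop (𝓝 z) →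
      f z ≤ liminf (fun ν => F ν (zs ν)) atTop) ∧
    (∃ zs : ℕ → E, (∀ ν, zs ν ∈ Z) ∧ Tendsto zs atTop (𝓝 z) ∧
      limsup (fun ν => F ν (zs ν)) atTop ≤ f z)

/-- A sequence of functions is equi-lower semicontinuous on `Z`. -/
def EquiLscOn {E : Type*} [PseudoMetricSpace E] (Z : Set E) (F : ℕ → E → EReal) : Prop :=
  ∀ z ∈ Z,
    limsup (fun ν => F ν z) atTop = ⊥ ∨
    ∀ ρ ε : ℝ, 0 < ρ → 0 < ε → ∃ ν' : ℕ, ∃ δ : ℝ, 0 < δ ∧ ∀ ν, ν' ≤ ν →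
      min (F ν z - (ε : EReal)) (ρ : EReal) ≤
        ⨅ (w : E) (_ : w ∈ Z) (_ : dist w z ≤ δ), F ν w

/-- Equi-upper semicontinuity on `Z`. -/
def EquiUscOn {E : Type*} [PseudoMetricSpace E] (Z : Set E) (F : ℕ → E → EReal) : Prop :=
  EquiLscOn Z (fun ν z => -(F ν z))

/-- Iterated lower limit as `(ν, x) → (∞, x̄)` with `x` ranging over `X`. -/
def liminfNuX {E : Type*} [PseudoMetricSpace E] (X : Set E) (xb : E)
    (h : ℕ → E → EReal) : EReal :=
  ⨆ (δ : ℝ) (_ : 0 < δ) (ν' : ℕ),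
    ⨅ (ν : ℕ) (_ : ν' ≤ ν) (x : E) (_ : x ∈ X) (_ : dist x xb ≤ δ), h ν x

/-- Upper limit as `ν → ∞`. -/
def limsupNu (h : ℕ → EReal) : EReal := ⨅ (ν' : ℕ), ⨆ (ν : ℕ) (_ : ν' ≤ ν), h ν

/-- Lower limit as `α → −∞`. -/
def liminfAlphaBot (G : ℝ → EReal) : EReal := ⨆ (αb : ℝ), ⨅ (α : ℝ) (_ : α ≤ αb), G α

/-- Upper limit as `α → ∞`. -/
def limsupAlphaTop (G : ℝ → EReal) : EReal := ⨅ (αb : ℝ), ⨆ (α : ℝ) (_ : αb ≤ α), G α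

/-- Weak convergence of measures: integrals of bounded continuous functions converge. -/
def WeakConv {Ω : Type*} [TopologicalSpace Ω] [MeasurableSpace Ω]
    (Pν : ℕ → Measure Ω) (P : Measure Ω) : Prop :=
  ∀ h : Ω → ℝ, Continuous h → (∃ C : ℝ, ∀ ω, |h ω| ≤ C) →
    Tendsto (fun ν => ∫ ω, h ω ∂(Pν ν)) atTop (𝓝 (∫ ω, h ω ∂P))

/-- The outer limit of a sequence of sets in a topological space. -/
def OuterLimit {X : Type*} [TopologicalSpace X] (S : ℕ → Set X) : Set X :=
  {x | ∃ φ : ℕ → ℕ, StrictMono φ ∧ ∃ s : ℕ → X, (∀ κ, s κ ∈ S (φ κ)) ∧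
    Tendsto s atTop (𝓝 x)}

/-- The set of minimizers of `g` over `S`. -/
def ArgminOn {E : Type*} (S : Set E) (g : E → EReal) : Set E :=
  {y ∈ S | ∀ z ∈ S, g y ≤ g z}

/-- `b(f)(x,ξ) = inf_{y ∈ 𝒴(x,ξ)} { φ(x,y,ξ) + β f(y) }`. -/
def bop {E Ξ' : Type*} (Y : E → Ξ' → Set E) (β : ℝ) (φ : E → E → Ξ' → ℝ)
    (f : E → EReal) (x : E) (ξ : Ξ') : EReal :=
  ⨅ (y : E) (_ : y ∈ Y x ξ), (((φ x y ξ : ℝ) : EReal) + (β : EReal) * f y)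

/-- The epigraph of `f`, viewed within `X × ℝ`. -/
def epiSet {E : Type*} (X : Set E) (f : E → EReal) : Set (E × ℝ) :=
  {p | p.1 ∈ X ∧ f p.1 ≤ ((p.2 : ℝ) : EReal)}

/-- The Attouch–Wets distance between `f` and `g` (epigraphs taken within `X × ℝ`,
with centre `zc`). -/
def awDist {E : Type*} [PseudoMetricSpace E] (X : Set E) (zc : E × ℝ)
    (f g : E → EReal) : ℝ :=
  ∫ ρ in Set.Ioi (0 : ℝ),
    (sSup ((fun z => |Metric.infDist z (epiSet X f) - Metric.infDist z (epiSet X g)|) ''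
      (Metric.closedBall zc ρ))) * Real.exp (-ρ)

/-- `f` is a lower semicontinuous function on `X`, not identically `∞`. -/
def LscFcnOn {E : Type*} [TopologicalSpace E] (X : Set E) (f : E → EReal) : Prop :=
  LowerSemicontinuousOn f X ∧ ∃ x ∈ X, f x ≠ ⊤

/-- `𝒱` is (sequentially) closed with respect to the Attouch–Wets distance. -/
def DlSeqClosed {E : Type*} [PseudoMetricSpace E] (X : Set E) (zc : E × ℝ)
    (𝒱 : Set (E → EReal)) : Prop :=
  ∀ Vs : ℕ → (E → EReal), (∀ ν, Vs ν ∈ 𝒱) → ∀ W, LscFcnOn X W →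
    Tendsto (fun ν => awDist X zc (Vs ν) W) atTop (𝓝 0) → W ∈ 𝒱

/-- `𝒱` is (sequentially) compact with respect to the Attouch–Wets distance. -/
def DlSeqCompact {E : Type*} [PseudoMetricSpace E] (X : Set E) (zc : E × ℝ)
    (𝒱 : Set (E → EReal)) : Prop :=
  ∀ Vs : ℕ → (E → EReal), (∀ ν, Vs ν ∈ 𝒱) → ∃ W ∈ 𝒱, ∃ φ : ℕ → ℕ,
    StrictMono φ ∧ Tendsto (fun κ => awDist X zc (Vs (φ κ)) W) atTop (𝓝 0)

/-- The outer limit, with respect to epi-convergence on `X`, of a sequence of sets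
of functions. -/
def EpiOuterLimit {E : Type*} [TopologicalSpace E] (X : Set E)
    (S : ℕ → Set (E → EReal)) : Set (E → EReal) :=
  {W | ∃ φ : ℕ → ℕ, StrictMono φ ∧ ∃ s : ℕ → (E → EReal),
    (∀ κ, s κ ∈ S (φ κ)) ∧ EpiConvergesOn X s W}

/-! ### Filters and compactness -/

lemma exists_leftInverse_tendsto_atTop {ψ : ℕ → ℕ} (hψ : Function.Injective ψ) :
    ∃ k : ℕ → ℕ, Function.LeftInverse k ψ ∧ Tendsto k atTop atTop := by
  refine ⟨Function.extend ψ id id, fun κ => hψ.extend_apply _ _ κ, ?_⟩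
  rw [← Nat.cofinite_eq_atTop]
  refine Tendsto.cofinite_of_finite_preimage_singleton fun κ =>
    (toFinite {ψ κ, κ}).subset fun ν (hν : Function.extend ψ id id ν = κ) => ?_
  by_cases h : ∃ j, ψ j = ν
  · obtain ⟨j, rfl⟩ := h
    rw [hψ.extend_apply] at hν
    exact Or.inl (congrArg ψ hν)
  · rw [Function.extend_apply' _ _ _ h] at hν
    exact Or.inr hν

lemma eventually_forall_mem_of_isCompact {ι M : Type*} [TopologicalSpace M] {l : Filter ι}
    {K : Set M} (hK : IsCompact K) {p : ι → M → Prop}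
    (h : ∀ y ∈ K, ∀ᶠ q : ι × M in l ×ˢ 𝓝[K] y, p q.1 q.2) :
    ∀ᶠ i in l, ∀ y ∈ K, p i y := by
  refine hK.induction_on (p := fun s => ∀ᶠ i in l, ∀ y ∈ s, p i y) (by simp)
    (fun s t hst ht => ht.mono fun i hi y hy => hi y (hst hy))
    (fun s t hs ht => ?_) fun y hy => ?_
  · filter_upwards [hs, ht] with i his hit y hy using hy.elim (his y) (hit y)
  · obtain ⟨pi, hpi, py, hpy, hp⟩ := eventually_prod_iff.1 (h y hy)
    exact ⟨{y | py y}, hpy, hpi.mono fun i hi y hy => hp hi hy⟩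

-- A diagonal argument: `k ν` is the largest `k ≤ ν` for which `A ν` meets the basis set `U k`.
lemma exists_seq_mem_tendsto {M : Type*} {l : Filter M} [l.IsCountablyGenerated]
    {A : ℕ → Set M} (hA : ∀ ν, (A ν).Nonempty)
    (h : ∀ U ∈ l, ∀ᶠ ν in atTop, (A ν ∩ U).Nonempty) :
    ∃ qs : ℕ → M, (∀ ν, qs ν ∈ A ν) ∧ Tendsto qs atTop l := by
  classical
  obtain ⟨U, hU⟩ := l.exists_antitone_basis
  let k : ℕ → ℕ := fun ν => Nat.findGreatest (fun k => (A ν ∩ U k).Nonempty) ν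
  have hk : ∀ ν, ∃ q ∈ A ν, ∀ j ≤ ν, (A ν ∩ U j).Nonempty → q ∈ U (k ν) := by
    intro ν
    by_cases hν : ∃ j ≤ ν, (A ν ∩ U j).Nonempty
    · obtain ⟨j, hj, hjU⟩ := hν
      obtain ⟨q, hqA, hqU⟩ :=
        Nat.findGreatest_spec (P := fun k => (A ν ∩ U k).Nonempty) hj hjU
      exact ⟨q, hqA, fun _ _ _ => hqU⟩
    · exact ⟨(hA ν).some, (hA ν).some_mem, fun j hj hjU => absurd ⟨j, hj, hjU⟩ hν⟩
  choose qs hqA hqU using hk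
  refine ⟨qs, hqA, hU.toHasBasis.tendsto_right_iff.2 fun j _ => ?_⟩
  filter_upwards [h _ (hU.mem j), eventually_ge_atTop j] with ν hν hjν
  exact hU.antitone (Nat.le_findGreatest hjν hν) (hqU ν j hjν hν)

/-! ### Epi-convergence -/

namespace EpiConvergesOn

variable {E : Type*} [TopologicalSpace E] [FirstCountableTopology E] {Z : Set E}
  {F : ℕ → E → EReal} {f : E → EReal}

lemma eventually_lt (h : EpiConvergesOn Z F f) {z : E} (hz : z ∈ Z) {a : EReal} (ha : a < f z) :
    ∀ᶠ p : ℕ × E in atTop ×ˢ 𝓝[Z] z, a < F p.1 p.2 := by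
  by_contra hfreq
  obtain ⟨p, hp, hpF⟩ := exists_seq_forall_of_frequently
    ((not_eventually.1 hfreq).and_eventually (tendsto_snd.eventually self_mem_nhdsWithin))
  obtain ⟨ψ, hψ, hψp⟩ := strictMono_subseq_of_tendsto_atTop (tendsto_fst.comp hp)
  obtain ⟨k, hkψ, hk⟩ := exists_leftInverse_tendsto_atTop hψp.injective
  have hz' : Tendsto (fun κ => (p (ψ κ)).2) atTop (𝓝 z) :=
    ((tendsto_snd.comp hp).comp hψ.tendsto_atTop).mono_right nhdsWithin_le_nhds
  have hlim : a < liminf (fun ν => F ν (p (ψ (k ν))).2) atTop :=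
    ha.trans_le ((h z hz).1 _ (fun ν => (hpF _).2) (hz'.comp hk))
  obtain ⟨κ, hκ⟩ := (hψp.tendsto_atTop.eventually (eventually_lt_of_lt_liminf hlim)).exists
  have hkκ : k (p (ψ κ)).1 = κ := hkψ κ
  simp only [Function.comp_apply, hkκ] at hκ
  exact (hpF (ψ κ)).1 hκ

lemma le_liminf_prod (h : EpiConvergesOn Z F f) {z : E} (hz : z ∈ Z) :
    f z ≤ liminf (fun p : ℕ × E => F p.1 p.2) (atTop ×ˢ 𝓝[Z] z) :=
  le_of_forall_lt fun a ha => by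
    obtain ⟨b, hab, hb⟩ := exists_between ha
    exact hab.trans_le (le_liminf_of_le (by isBoundedDefault)
      ((h.eventually_lt hz hb).mono fun _ => le_of_lt))

lemma comp_tendsto (h : EpiConvergesOn Z F f) {k : ℕ → ℕ} (hk : Tendsto k atTop atTop) :
    EpiConvergesOn Z (fun ν => F (k ν)) f := by
  refine fun z hz => ⟨fun zs hzs hlim => ?_, ?_⟩
  · have hzk : Tendsto (fun ν => (k ν, zs ν)) atTop (atTop ×ˢ 𝓝[Z] z) :=
      hk.prodMk (tendsto_nhdsWithin_iff.2 ⟨hlim, .of_forall hzs⟩)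
    exact (h.le_liminf_prod hz).trans
      (liminf_le_liminf_of_le (u := fun p : ℕ × E => F p.1 p.2) hzk)
  · obtain ⟨zs, hzs, hlim, hle⟩ := (h z hz).2
    exact ⟨zs ∘ k, fun ν => hzs _, hlim.comp hk,
      (limsup_le_limsup_of_le (u := fun ν => F ν (zs ν)) hk).trans hle⟩

lemma lowerSemicontinuousOn (h : EpiConvergesOn Z F f) : LowerSemicontinuousOn f Z := by
  intro z hz a ha
  obtain ⟨b, hab, hb⟩ := exists_between ha
  obtain ⟨pν, hpν, pz, hpz, hp⟩ := eventually_prod_iff.1 (h.eventually_lt hz hb)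
  filter_upwards [eventually_eventually_nhdsWithin.2 hpz, self_mem_nhdsWithin] with w hw hwZ
  obtain ⟨zs, hzs, hlim, hle⟩ := (h w hwZ).2
  have hlimZ : Tendsto zs atTop (𝓝[Z] w) := tendsto_nhdsWithin_iff.2 ⟨hlim, .of_forall hzs⟩
  refine hab.trans_le (le_trans (le_limsup_of_frequently_le (Eventually.frequently ?_)
    (by isBoundedDefault)) hle)
  filter_upwards [hpν, hlimZ.eventually hw] with ν hν hzν using (hp hν hzν).le

end EpiConvergesOn

/-! ### Set convergence and the Attouch–Wets distance -/

/-- Painlevé–Kuratowski convergence of the sets `A ν` to `B`: points of `B` are limits of points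
of `A ν` and points outside `B` are not even cluster points. In a first countable space these
neighbourhood conditions agree with the usual sequential inner and outer limits. -/
structure KuratowskiConverges {M : Type*} [TopologicalSpace M] (A : ℕ → Set M) (B : Set M) :
    Prop where
  inner : ∀ q ∈ B, ∀ U ∈ 𝓝 q, ∀ᶠ ν in atTop, (A ν ∩ U).Nonempty
  outer : ∀ q ∉ B, ∀ᶠ p : ℕ × M in atTop ×ˢ 𝓝 q, p.2 ∉ A p.1

/-- The largest difference of the distances to `A` and to `B` over the closed ball of radius `ρ`
around `zc`, that is, the integrand of the Attouch–Wets distance without its weight. -/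
def distGap {M : Type*} [PseudoMetricSpace M] (A B : Set M) (zc : M) (ρ : ℝ) : ℝ :=
  sSup ((fun z => |Metric.infDist z A - Metric.infDist z B|) '' Metric.closedBall zc ρ)

/-- The Attouch–Wets distance of two sets; `awDist` is the case of epigraphs. -/
def attouchWetsDist {M : Type*} [PseudoMetricSpace M] (zc : M) (A B : Set M) : ℝ :=
  ∫ ρ in Ioi (0 : ℝ), distGap A B zc ρ * Real.exp (-ρ)

section AttouchWets

variable {M : Type*} [PseudoMetricSpace M]

lemma KuratowskiConverges.tendsto_infDist [ProperSpace M] {A : ℕ → Set M} {B : Set M}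
    (h : KuratowskiConverges A B) (hA : ∀ ν, (A ν).Nonempty) (hB : B.Nonempty) (p : M) :
    Tendsto (fun ν => Metric.infDist p (A ν)) atTop (𝓝 (Metric.infDist p B)) := by
  refine tendsto_order.2 ⟨fun r hr => ?_, fun r hr => ?_⟩
  · obtain ⟨s, hrs, hs⟩ := exists_between hr
    have hdisj : ∀ᶠ ν in atTop, ∀ q ∈ Metric.closedBall p s, q ∉ A ν := by
      refine eventually_forall_mem_of_isCompact (isCompact_closedBall p s) fun q hq => ?_
      have hqB : q ∉ B := fun hqB =>
        (hs.trans_le ((Metric.infDist_le_dist_of_mem hqB).trans_eq (dist_comm p q))).not_ge hq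
      exact (h.outer q hqB).filter_mono (prod_mono_right _ nhdsWithin_le_nhds)
    filter_upwards [hdisj] with ν hν
    refine hrs.trans_le ((Metric.le_infDist (hA ν)).2 fun q hq => ?_)
    by_contra! hlt
    exact hν q (Metric.mem_closedBall'.2 hlt.le) hq
  · obtain ⟨q, hqB, hqr⟩ := (Metric.infDist_lt_iff hB).1 hr
    filter_upwards [h.inner q hqB _ (Metric.isOpen_ball.mem_nhds (Metric.mem_ball'.2 hqr))]
      with ν ⟨w, hwA, hw⟩
    exact (Metric.infDist_le_dist_of_mem hwA).trans_lt (Metric.mem_ball'.1 hw)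

lemma kuratowskiConverges_of_tendsto_infDist {A : ℕ → Set M} {B : Set M}
    (hA : ∀ ν, (A ν).Nonempty) (hBc : IsClosed B) (hB : B.Nonempty)
    (h : ∀ p, Tendsto (fun ν => Metric.infDist p (A ν)) atTop (𝓝 (Metric.infDist p B))) :
    KuratowskiConverges A B where
  inner q hq U hU := by
    obtain ⟨ε, hε, hεU⟩ := Metric.mem_nhds_iff.1 hU
    have hlt : Metric.infDist q B < ε := by rwa [Metric.infDist_zero_of_mem hq]
    filter_upwards [(h q).eventually (gt_mem_nhds hlt)] with ν hν
    obtain ⟨w, hwA, hw⟩ := (Metric.infDist_lt_iff (hA ν)).1 hν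
    exact ⟨w, hwA, hεU (Metric.mem_ball'.2 hw)⟩
  outer q hq := by
    obtain ⟨r, hr0, hr⟩ := exists_between ((hBc.notMem_iff_infDist_pos hB).1 hq)
    filter_upwards [prod_mem_prod ((h q).eventually (lt_mem_nhds hr)) (Metric.ball_mem_nhds q hr0)]
      with p ⟨hpr, hpq⟩ hpA
    exact lt_asymm hpr
      ((Metric.infDist_le_dist_of_mem hpA).trans_lt (Metric.mem_ball'.1 hpq))

lemma abs_infDist_sub_infDist_le (A B : Set M) (z w : M) :
    |Metric.infDist z A - Metric.infDist z B| ≤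
      |Metric.infDist w A - Metric.infDist w B| + 2 * dist z w := by
  have hA := (Metric.lipschitz_infDist_pt A).dist_le_mul z w
  have hB := (Metric.lipschitz_infDist_pt B).dist_le_mul z w
  rw [Real.dist_eq, NNReal.coe_one, one_mul, abs_le] at hA hB
  have hle := le_abs_self (Metric.infDist w A - Metric.infDist w B)
  have hge := neg_abs_le (Metric.infDist w A - Metric.infDist w B)
  exact abs_le.2 ⟨by linarith, by linarith⟩

variable (A B : Set M) (zc : M)

lemma abs_infDist_sub_infDist_le_of_mem_closedBall {ρ : ℝ} {z : M}
    (hz : z ∈ Metric.closedBall zc ρ) :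
    |Metric.infDist z A - Metric.infDist z B| ≤
      |Metric.infDist zc A - Metric.infDist zc B| + 2 * ρ :=
  (abs_infDist_sub_infDist_le A B z zc).trans (by linarith [Metric.mem_closedBall.1 hz])

lemma distGap_nonneg (ρ : ℝ) : 0 ≤ distGap A B zc ρ :=
  Real.sSup_nonneg (forall_mem_image.2 fun _ _ => abs_nonneg _)

lemma distGap_le {ρ c : ℝ} (hc : 0 ≤ c)
    (h : ∀ z ∈ Metric.closedBall zc ρ, |Metric.infDist z A - Metric.infDist z B| ≤ c) :
    distGap A B zc ρ ≤ c :=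
  Real.sSup_le (forall_mem_image.2 h) hc

lemma le_distGap {ρ : ℝ} {z : M} (hz : z ∈ Metric.closedBall zc ρ) :
    |Metric.infDist z A - Metric.infDist z B| ≤ distGap A B zc ρ :=
  le_csSup ⟨_, forall_mem_image.2 fun _ hw =>
    abs_infDist_sub_infDist_le_of_mem_closedBall A B zc hw⟩ (mem_image_of_mem _ hz)

lemma monotone_distGap : Monotone (distGap A B zc) := fun _ _ h =>
  distGap_le A B zc (distGap_nonneg A B zc _) fun _ hz =>
    le_distGap A B zc (Metric.closedBall_subset_closedBall h hz)

lemma measurable_distGap_mul_exp : Measurable fun ρ => distGap A B zc ρ * Real.exp (-ρ) :=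
  (monotone_distGap A B zc).measurable.mul (by fun_prop)

lemma integrableOn_add_mul_exp_neg (C : ℝ) :
    IntegrableOn (fun ρ : ℝ => (C + 2 * ρ) * Real.exp (-ρ)) (Ioi 0) := by
  have hconst := (Real.GammaIntegral_convergent one_pos).const_mul C
  have hlin := (Real.GammaIntegral_convergent two_pos).const_mul 2
  refine IntegrableOn.congr_fun (hconst.add hlin) (fun ρ _ => ?_) measurableSet_Ioi
  norm_num
  ring

lemma norm_distGap_mul_exp_le {C ρ : ℝ} (hC : |Metric.infDist zc A - Metric.infDist zc B| ≤ C)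
    (hρ : 0 < ρ) : ‖distGap A B zc ρ * Real.exp (-ρ)‖ ≤ (C + 2 * ρ) * Real.exp (-ρ) := by
  rw [Real.norm_of_nonneg (mul_nonneg (distGap_nonneg A B zc ρ) (Real.exp_pos _).le)]
  have hC0 : 0 ≤ C := (abs_nonneg _).trans hC
  gcongr
  exact distGap_le A B zc (by positivity) fun z hz =>
    (abs_infDist_sub_infDist_le_of_mem_closedBall A B zc hz).trans (by linarith)

lemma integrableOn_distGap_mul_exp :
    IntegrableOn (fun ρ => distGap A B zc ρ * Real.exp (-ρ)) (Ioi 0) :=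
  (integrableOn_add_mul_exp_neg _).mono' (measurable_distGap_mul_exp A B zc).aestronglyMeasurable
    ((ae_restrict_mem measurableSet_Ioi).mono fun _ hρ =>
      norm_distGap_mul_exp_le A B zc le_rfl hρ)

-- The gap is monotone in the radius, so the integral over `(R, R + 1]` controls its value at `R`.
lemma distGap_mul_exp_le_attouchWetsDist {R : ℝ} (hR : 0 ≤ R) :
    distGap A B zc R * Real.exp (-(R + 1)) ≤ attouchWetsDist zc A B := by
  have hsub : Ioc R (R + 1) ⊆ Ioi 0 := fun ρ hρ => hR.trans_lt hρ.1
  have hint := integrableOn_distGap_mul_exp A B zc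
  calc distGap A B zc R * Real.exp (-(R + 1))
      = ∫ _ in Ioc R (R + 1), distGap A B zc R * Real.exp (-(R + 1)) := by simp
    _ ≤ ∫ ρ in Ioc R (R + 1), distGap A B zc ρ * Real.exp (-ρ) :=
        setIntegral_mono_on (integrableOn_const (by simp)) (hint.mono_set hsub) measurableSet_Ioc
          fun ρ hρ => mul_le_mul (monotone_distGap A B zc hρ.1.le)
            (Real.exp_le_exp.2 (neg_le_neg hρ.2)) (Real.exp_pos _).le (distGap_nonneg A B zc ρ)
    _ ≤ attouchWetsDist zc A B :=
        setIntegral_mono_set hint (.of_forall fun ρ =>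
          mul_nonneg (distGap_nonneg A B zc ρ) (Real.exp_pos _).le) hsub.eventuallyLE

variable {A B}

-- Distance functions are nonexpansive, so they converge uniformly on balls, which are compact.
lemma tendsto_distGap_of_tendsto_infDist [ProperSpace M] {A : ℕ → Set M}
    (h : ∀ p, Tendsto (fun ν => Metric.infDist p (A ν)) atTop (𝓝 (Metric.infDist p B))) (ρ : ℝ) :
    Tendsto (fun ν => distGap (A ν) B zc ρ) atTop (𝓝 0) := by
  refine tendsto_order.2 ⟨fun a ha => .of_forall fun ν => ha.trans_le (distGap_nonneg _ _ _ _),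
    fun ε hε => ?_⟩
  have hunif : ∀ᶠ ν in atTop, ∀ z ∈ Metric.closedBall zc ρ,
      |Metric.infDist z (A ν) - Metric.infDist z B| ≤ ε / 2 := by
    refine eventually_forall_mem_of_isCompact (isCompact_closedBall zc ρ) fun z _ => ?_
    have hz := (h z).eventually (Metric.ball_mem_nhds _ (by linarith : 0 < ε / 6))
    have hball : Metric.ball z (ε / 6) ∈ 𝓝[Metric.closedBall zc ρ] z :=
      nhdsWithin_le_nhds (Metric.ball_mem_nhds z (by linarith))
    filter_upwards [prod_mem_prod hz hball] with p ⟨hpν, hpz⟩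
    have hpν' : |Metric.infDist z (A p.1) - Metric.infDist z B| < ε / 6 := hpν
    linarith [abs_infDist_sub_infDist_le (A p.1) B p.2 z, Metric.mem_ball.1 hpz]
  filter_upwards [hunif] with ν hν
  exact (distGap_le _ _ _ (by linarith) hν).trans_lt (by linarith)

lemma tendsto_attouchWetsDist_of_tendsto_infDist [ProperSpace M] {A : ℕ → Set M}
    (h : ∀ p, Tendsto (fun ν => Metric.infDist p (A ν)) atTop (𝓝 (Metric.infDist p B))) :
    Tendsto (fun ν => attouchWetsDist zc (A ν) B) atTop (𝓝 0) := by
  obtain ⟨C, hC⟩ := ((h zc).sub_const (Metric.infDist zc B)).abs.bddAbove_range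
  have hbound : ∀ ν, ∀ᵐ ρ ∂volume.restrict (Ioi (0 : ℝ)),
      ‖distGap (A ν) B zc ρ * Real.exp (-ρ)‖ ≤ (C + 2 * ρ) * Real.exp (-ρ) := fun ν =>
    (ae_restrict_mem measurableSet_Ioi).mono fun ρ hρ =>
      norm_distGap_mul_exp_le _ _ zc (hC (mem_range_self ν)) hρ
  have hlim := tendsto_integral_of_dominated_convergence _
    (fun ν => (measurable_distGap_mul_exp (A ν) B zc).aestronglyMeasurable)
    (integrableOn_add_mul_exp_neg C) hbound (.of_forall fun ρ =>
      (tendsto_distGap_of_tendsto_infDist zc h ρ).mul_const (Real.exp (-ρ)))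
  simp only [zero_mul, integral_zero] at hlim
  exact hlim

lemma tendsto_infDist_of_tendsto_attouchWetsDist {A : ℕ → Set M}
    (h : Tendsto (fun ν => attouchWetsDist zc (A ν) B) atTop (𝓝 0)) (p : M) :
    Tendsto (fun ν => Metric.infDist p (A ν)) atTop (𝓝 (Metric.infDist p B)) := by
  refine tendsto_iff_dist_tendsto_zero.2 (squeeze_zero (fun _ => dist_nonneg) (fun ν => ?_)
    (by simpa only [zero_mul] using h.mul_const (Real.exp (dist p zc + 1))))
  rw [← div_le_iff₀ (Real.exp_pos _), div_eq_mul_inv, ← Real.exp_neg, Real.dist_eq]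
  exact (mul_le_mul_of_nonneg_right (le_distGap (A ν) B zc (Metric.mem_closedBall.2 le_rfl))
    (Real.exp_pos _).le).trans (distGap_mul_exp_le_attouchWetsDist (A ν) B zc dist_nonneg)

lemma tendsto_attouchWetsDist_iff_kuratowskiConverges [ProperSpace M] {A : ℕ → Set M}
    (hA : ∀ ν, (A ν).Nonempty) (hBc : IsClosed B) (hB : B.Nonempty) :
    Tendsto (fun ν => attouchWetsDist zc (A ν) B) atTop (𝓝 0) ↔ KuratowskiConverges A B :=
  ⟨fun h => kuratowskiConverges_of_tendsto_infDist hA hBc hB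
      (tendsto_infDist_of_tendsto_attouchWetsDist zc h),
    fun h => tendsto_attouchWetsDist_of_tendsto_infDist zc (h.tendsto_infDist hA hB)⟩

end AttouchWets

section Epigraph

variable {E : Type*} [TopologicalSpace E] {X : Set E} {F : ℕ → E → EReal} {f : E → EReal}

lemma isClosed_epiSet (hX : IsClosed X) (hf : LowerSemicontinuousOn f X) :
    IsClosed (epiSet X f) :=
  ((lowerSemicontinuousOn_iff_isClosed_epigraph hX).1 hf).preimage
    (f := fun p : E × ℝ => (p.1, (p.2 : EReal)))
    (continuous_fst.prodMk (continuous_coe_real_ereal.comp continuous_snd))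

lemma LscFcnOn.epiSet_nonempty (hf : LscFcnOn X f) : (epiSet X f).Nonempty :=
  let ⟨x, hx, hfx⟩ := hf.2
  ⟨(x, (f x).toReal), hx, EReal.le_coe_toReal hfx⟩

lemma KuratowskiConverges.le_liminf_of_tendsto
    (h : KuratowskiConverges (fun ν => epiSet X (F ν)) (epiSet X f)) {z : E} {zs : ℕ → E}
    (hzs : ∀ ν, zs ν ∈ X) (hlim : Tendsto zs atTop (𝓝 z)) :
    f z ≤ liminf (fun ν => F ν (zs ν)) atTop := by
  refine EReal.ge_of_forall_gt_iff_ge.1 fun a ha => ?_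
  have hpair : Tendsto (fun ν => (ν, (zs ν, a))) atTop (atTop ×ˢ 𝓝 (z, a)) :=
    tendsto_id.prodMk (hlim.prodMk_nhds tendsto_const_nhds)
  refine le_liminf_of_le (by isBoundedDefault) ?_
  filter_upwards [hpair.eventually (h.outer (z, a) fun hmem => ha.not_ge hmem.2)] with ν hν
  exact (not_le.1 fun hle => hν ⟨hzs ν, hle⟩).le

variable [FirstCountableTopology E]

lemma EpiConvergesOn.kuratowskiConverges (hX : IsClosed X) (h : EpiConvergesOn X F f) :
    KuratowskiConverges (fun ν => epiSet X (F ν)) (epiSet X f) where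
  inner q hq U hU := by
    obtain ⟨V, hV, T, hT, hVT⟩ := mem_nhds_prod_iff.1 hU
    obtain ⟨t, htT, hqt⟩ : ∃ t ∈ T, q.2 < t :=
      nonempty_of_mem (inter_mem (nhdsWithin_le_nhds hT) self_mem_nhdsWithin : _ ∈ 𝓝[>] q.2)
    obtain ⟨zs, hzs, hlim, hle⟩ := (h q.1 hq.1).2
    have hlt : limsup (fun ν => F ν (zs ν)) atTop < (t : EReal) :=
      (hle.trans hq.2).trans_lt (EReal.coe_lt_coe_iff.2 hqt)
    filter_upwards [eventually_lt_of_limsup_lt hlt, hlim.eventually hV] with ν hν hνV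
    exact ⟨(zs ν, t), ⟨hzs ν, hν.le⟩, hVT ⟨hνV, htT⟩⟩
  outer q hq := by
    have hfst : Tendsto (fun p : ℕ × (E × ℝ) => p.2.1) (atTop ×ˢ 𝓝 q) (𝓝 q.1) :=
      (continuous_fst.tendsto q).comp tendsto_snd
    have hsnd : Tendsto (fun p : ℕ × (E × ℝ) => p.2.2) (atTop ×ˢ 𝓝 q) (𝓝 q.2) :=
      (continuous_snd.tendsto q).comp tendsto_snd
    by_cases hqX : q.1 ∈ X
    · obtain ⟨a, hqa, ha⟩ := EReal.lt_iff_exists_real_btwn.1 (not_le.1 fun hle => hq ⟨hqX, hle⟩)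
      have hX' : Tendsto (fun p : ℕ × (E × ℝ) => (p.1, p.2.1))
          (atTop ×ˢ 𝓝 q ⊓ 𝓟 {p | p.2.1 ∈ X}) (atTop ×ˢ 𝓝[X] q.1) :=
        (tendsto_fst.mono_left inf_le_left).prodMk (tendsto_nhdsWithin_iff.2
          ⟨hfst.mono_left inf_le_left, eventually_inf_principal.2 (.of_forall fun _ => id)⟩)
      filter_upwards [eventually_inf_principal.1 (hX'.eventually (h.eventually_lt hqX ha)),
        hsnd.eventually (gt_mem_nhds (EReal.coe_lt_coe_iff.1 hqa))] with p hpF hpa hp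
      exact lt_asymm hpa (EReal.coe_lt_coe_iff.1 ((hpF hp.1).trans_le hp.2))
    · filter_upwards [hfst.eventually (hX.isOpen_compl.mem_nhds hqX)] with p hpX hp
        using hpX hp.1

lemma KuratowskiConverges.exists_recovery
    (h : KuratowskiConverges (fun ν => epiSet X (F ν)) (epiSet X f)) {z : E} (hz : z ∈ X) :
    ∃ zs : ℕ → E, (∀ ν, zs ν ∈ X) ∧ Tendsto zs atTop (𝓝 z) ∧
      limsup (fun ν => F ν (zs ν)) atTop ≤ f z := by
  let A : ℕ → Set (E × EReal) := fun ν => {p | p.1 ∈ X ∧ F ν p.1 ≤ p.2}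
  have hA : ∀ U ∈ 𝓝 (z, f z), ∀ᶠ ν in atTop, (A ν ∩ U).Nonempty := by
    intro U hU
    rcases eq_or_ne (f z) ⊤ with htop | htop
    · exact .of_forall fun ν => ⟨(z, f z), ⟨hz, htop ▸ le_top⟩, mem_of_mem_nhds hU⟩
    obtain ⟨V, T, hV, hzV, hT, hzT, hVT⟩ := mem_nhds_prod_iff'.1 hU
    obtain ⟨u, hu, huT⟩ := exists_Ico_subset_of_mem_nhds (hT.mem_nhds hzT)
      ⟨⊤, lt_top_iff_ne_top.2 htop⟩
    obtain ⟨t, hzt, htu⟩ := EReal.lt_iff_exists_real_btwn.1 hu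
    have hW : V ×ˢ ((↑) ⁻¹' T : Set ℝ) ∈ 𝓝 (z, t) :=
      prod_mem_nhds (hV.mem_nhds hzV)
        ((hT.preimage continuous_coe_real_ereal).mem_nhds (huT ⟨hzt.le, htu⟩))
    filter_upwards [h.inner (z, t) ⟨hz, hzt.le⟩ _ hW] with ν ⟨q, hq, hqV, hqT⟩
    exact ⟨(q.1, q.2), hq, hVT ⟨hqV, hqT⟩⟩
  obtain ⟨qs, hqs, hlim⟩ := exists_seq_mem_tendsto (A := A) (fun _ => ⟨(z, ⊤), hz, le_top⟩) hA
  refine ⟨fun ν => (qs ν).1, fun ν => (hqs ν).1, (continuous_fst.tendsto _).comp hlim, ?_⟩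
  have hval : Tendsto (fun ν => (qs ν).2) atTop (𝓝 (f z)) := (continuous_snd.tendsto _).comp hlim
  exact (limsup_le_limsup (.of_forall fun ν => (hqs ν).2)).trans_eq hval.limsup_eq

lemma kuratowskiConverges_epiSet_iff (hX : IsClosed X) :
    KuratowskiConverges (fun ν => epiSet X (F ν)) (epiSet X f) ↔ EpiConvergesOn X F f :=
  ⟨fun h _ hz => ⟨fun _ hzs hlim => h.le_liminf_of_tendsto hzs hlim, h.exists_recovery hz⟩,
    fun h => h.kuratowskiConverges hX⟩

end Epigraph

lemma tendsto_awDist_iff_epiConvergesOn {E : Type*} [PseudoMetricSpace E] [ProperSpace E]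
    {X : Set E} (hX : IsClosed X) (zc : E × ℝ) {F : ℕ → E → EReal} {f : E → EReal}
    (hF : ∀ ν, LscFcnOn X (F ν)) (hf : LscFcnOn X f) :
    Tendsto (fun ν => awDist X zc (F ν) f) atTop (𝓝 0) ↔ EpiConvergesOn X F f :=
  (tendsto_attouchWetsDist_iff_kuratowskiConverges zc (fun ν => (hF ν).epiSet_nonempty)
    (isClosed_epiSet hX hf.1) hf.epiSet_nonempty).trans (kuratowskiConverges_epiSet_iff hX)

/-! ### Equi-semicontinuity and continuous convergence -/

/-- Continuous convergence: `g ν (ων)` tends to `g₀ ω` whenever `ων` tends to `ω`, here in its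
filter form. -/
def ConvergesContinuously {Ω T : Type*} [TopologicalSpace Ω] [TopologicalSpace T]
    (g : ℕ → Ω → T) (g₀ : Ω → T) : Prop :=
  ∀ ω, Tendsto (fun p : ℕ × Ω => g p.1 p.2) (atTop ×ˢ 𝓝 ω) (𝓝 (g₀ ω))

namespace EquiLscOn

variable {E : Type*} [PseudoMetricSpace E] {Z : Set E} {F : ℕ → E → EReal} {z : E}

lemma eventually_lt_of_le (hF : EquiLscOn Z F) (hz : z ∈ Z) {a b : EReal} (hab : a < b) :
    ∀ᶠ p : ℕ × E in atTop ×ˢ 𝓝[Z] z, b ≤ F p.1 z → a < F p.1 p.2 := by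
  rcases hF z hz with hbot | hequi
  · have hlt : ∀ᶠ ν in atTop, F ν z < b := eventually_lt_of_limsup_lt (hbot ▸ bot_lt_of_lt hab)
    filter_upwards [tendsto_fst.eventually hlt] with p hp hbp using absurd hbp hp.not_ge
  obtain ⟨r, har, hrb⟩ := EReal.lt_iff_exists_real_btwn.1 hab
  obtain ⟨s, hrs, hsb⟩ := EReal.lt_iff_exists_real_btwn.1 hrb
  obtain ⟨N, δ, hδ, hN⟩ := hequi (max r 1) (s - r) (by positivity)
    (sub_pos.2 (EReal.coe_lt_coe_iff.1 hrs))
  filter_upwards [prod_mem_prod (eventually_ge_atTop N)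
    (inter_mem_nhdsWithin Z (Metric.closedBall_mem_nhds z hδ))] with p ⟨hpN, hpZ, hpδ⟩ hbp
  have hsub : (r : EReal) ≤ F p.1 z - ((s - r : ℝ) : EReal) := by
    have := EReal.sub_le_sub (hsb.le.trans hbp) (le_refl ((s - r : ℝ) : EReal))
    rwa [← EReal.coe_sub, sub_sub_cancel] at this
  calc a < r := har
    _ ≤ min (F p.1 z - ((s - r : ℝ) : EReal)) ((max r 1 : ℝ) : EReal) :=
        le_min hsub (EReal.coe_le_coe_iff.2 (le_max_left r 1))
    _ ≤ F p.1 p.2 := (hN p.1 hpN).trans ((iInf₂_le p.2 hpZ).trans (iInf_le _ hpδ))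

lemma eventually_lt_of_tendsto (hF : EquiLscOn Z F) (hz : z ∈ Z) {L a : EReal}
    (hL : Tendsto (fun ν => F ν z) atTop (𝓝 L)) (ha : a < L) :
    ∀ᶠ p : ℕ × E in atTop ×ˢ 𝓝[Z] z, a < F p.1 p.2 := by
  obtain ⟨b, hab, hb⟩ := exists_between ha
  filter_upwards [hF.eventually_lt_of_le hz hab,
    tendsto_fst.eventually (hL.eventually (lt_mem_nhds hb))] with p hp hbp using hp hbp.le

lemma tendsto_of_epiConvergesOn (hF : EquiLscOn Z F) {f : E → EReal} (h : EpiConvergesOn Z F f)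
    (hz : z ∈ Z) : Tendsto (fun ν => F ν z) atTop (𝓝 (f z)) := by
  refine tendsto_order.2 ⟨fun a ha => ?_, fun c hc => ?_⟩
  · exact eventually_lt_of_lt_liminf
      (ha.trans_le ((h z hz).1 (fun _ => z) (fun _ => hz) tendsto_const_nhds))
  · obtain ⟨zs, hzs, hlim, hle⟩ := (h z hz).2
    obtain ⟨a, hza, hac⟩ := exists_between hc
    have hzsZ : Tendsto (fun ν => (ν, zs ν)) atTop (atTop ×ˢ 𝓝[Z] z) :=
      tendsto_id.prodMk (tendsto_nhdsWithin_iff.2 ⟨hlim, .of_forall hzs⟩)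
    filter_upwards [hzsZ.eventually (hF.eventually_lt_of_le hz hac),
      eventually_lt_of_limsup_lt (hle.trans_lt hza)] with ν hν hνa
    exact lt_of_not_ge fun hcν => lt_asymm (hν hcν) hνa

lemma convergesContinuously {f : E → EReal} (hlsc : EquiLscOn univ F) (husc : EquiUscOn univ F)
    (h : ∀ z, Tendsto (fun ν => F ν z) atTop (𝓝 (f z))) : ConvergesContinuously F f := by
  intro z
  rw [← nhdsWithin_univ z]
  refine tendsto_order.2
    ⟨fun a ha => hlsc.eventually_lt_of_tendsto (mem_univ z) (h z) ha, fun c hc => ?_⟩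
  filter_upwards [EquiLscOn.eventually_lt_of_tendsto husc (mem_univ z)
    ((continuous_neg.tendsto _).comp (h z)) (EReal.neg_lt_neg_iff.2 hc)] with p hp
  exact EReal.neg_lt_neg_iff.1 hp

lemma prodMk_left {G : Type*} [PseudoMetricSpace G] {T : Set G} {F : ℕ → E × G → EReal}
    (hF : EquiLscOn (Z ×ˢ T) F) (hz : z ∈ Z) : EquiLscOn T fun ν w => F ν (z, w) := by
  refine fun w hw => (hF (z, w) ⟨hz, hw⟩).imp_right fun h ρ ε hρ hε => ?_
  obtain ⟨N, δ, hδ, hN⟩ := h ρ ε hρ hε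
  refine ⟨N, δ, hδ, fun ν hν => (hN ν hν).trans (le_iInf₂ fun w' hw' => le_iInf fun hdist => ?_)⟩
  refine (iInf₂_le (z, w') ⟨hz, hw'⟩).trans (iInf_le _ ?_)
  rwa [dist_prod_same_left]

end EquiLscOn

/-! ### Convergence of the optimal values -/

lemma tendsto_biInf_of_isCompact {ι M T : Type*} [TopologicalSpace M] [CompleteLinearOrder T]
    [TopologicalSpace T] [OrderTopology T] [DenselyOrdered T] {l : Filter ι} {K : Set M}
    (hK : IsCompact K) {h : ι → M → T} {h₀ : M → T}
    (hlow : ∀ y ∈ K, ∀ a < h₀ y, ∀ᶠ p : ι × M in l ×ˢ 𝓝[K] y, a < h p.1 p.2)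
    (hlim : ∀ y ∈ K, Tendsto (fun i => h i y) l (𝓝 (h₀ y))) :
    Tendsto (fun i => ⨅ y ∈ K, h i y) l (𝓝 (⨅ y ∈ K, h₀ y)) := by
  refine tendsto_order.2 ⟨fun a ha => ?_, fun a ha => ?_⟩
  · obtain ⟨b, hab, hb⟩ := exists_between ha
    filter_upwards [eventually_forall_mem_of_isCompact (p := fun i y => b < h i y) hK
      fun y hy => hlow y hy b (hb.trans_le (iInf₂_le y hy))] with i hi
    exact hab.trans_le (le_iInf₂ fun y hy => (hi y hy).le)
  · obtain ⟨y, hy, hya⟩ : ∃ y, ∃ _ : y ∈ K, h₀ y < a := by simpa only [iInf_lt_iff] using ha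
    filter_upwards [(hlim y hy).eventually (gt_mem_nhds hya)] with i hi
    exact (iInf₂_le y hy).trans_lt hi

lemma EpiConvergesOn.eventually_lt_coe_add_coe_mul {E : Type*} [TopologicalSpace E]
    [FirstCountableTopology E] {X : Set E} {c : ℕ → E → ℝ} {c₀ : E → ℝ} {V : ℕ → E → EReal}
    {W : E → EReal} {β : ℝ} (hβ : 0 ≤ β)
    (hc : EpiConvergesOn X (fun ν y => (c ν y : EReal)) fun y => (c₀ y : EReal))
    (hV : EpiConvergesOn X V W) {y : E} (hy : y ∈ X) {a : EReal}
    (ha : a < (c₀ y : EReal) + (β : EReal) * W y) :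
    ∀ᶠ p : ℕ × E in atTop ×ˢ 𝓝[X] y, a < (c p.1 p.2 : EReal) + (β : EReal) * V p.1 p.2 := by
  have : (𝓝[X] y).NeBot := mem_closure_iff_nhdsWithin_neBot.1 (subset_closure hy)
  have hβ' : (0 : EReal) ≤ β := EReal.coe_nonneg.2 hβ
  have hmul : (β : EReal) * W y ≤
      liminf (fun p : ℕ × E => (β : EReal) * V p.1 p.2) (atTop ×ˢ 𝓝[X] y) := by
    rw [EReal.liminf_const_mul_of_nonneg_of_ne_top hβ' (EReal.coe_ne_top β)]
    exact mul_le_mul_of_nonneg_left (hV.le_liminf_prod hy) hβ'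
  exact eventually_lt_of_lt_liminf
    (ha.trans_le ((add_le_add (hc.le_liminf_prod hy) hmul).trans EReal.le_liminf_add))

lemma tendsto_coe_add_coe_mul {ι : Type*} {l : Filter ι} {c : ι → ℝ} {c₀ : ℝ} {v : ι → EReal}
    {w : EReal} (β : ℝ) (hc : Tendsto c l (𝓝 c₀)) (hv : Tendsto v l (𝓝 w)) :
    Tendsto (fun i => (c i : EReal) + (β : EReal) * v i) l (𝓝 ((c₀ : EReal) + (β : EReal) * w)) :=
  (EReal.continuousAt_add (p := ((c₀ : EReal), (β : EReal) * w))
      (.inl (EReal.coe_ne_top _)) (.inl (EReal.coe_ne_bot _))).tendsto.comp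
    ((EReal.tendsto_coe.2 hc).prodMk_nhds
      (EReal.Tendsto.const_mul hv (.inl (EReal.coe_ne_bot β)) (.inl (EReal.coe_ne_top β))))

lemma tendsto_bop {E Ω : Type*} [PseudoMetricSpace E] {X : Set E} {Y : E → Ω → Set E} {β : ℝ}
    (hβ : 0 ≤ β) {φ : E → E → Ω → ℝ} {φν : ℕ → E → E → Ω → ℝ} {V : ℕ → E → EReal}
    {W : E → EReal} {x : E} {ω : Ω} (hYc : IsCompact (Y x ω)) (hYX : Y x ω ⊆ X)
    (hφe : EpiConvergesOn X (fun ν y => (φν ν x y ω : EReal)) fun y => (φ x y ω : EReal))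
    (hφp : ∀ y ∈ X, Tendsto (fun ν => φν ν x y ω) atTop (𝓝 (φ x y ω)))
    (hV : EquiLscOn X V) (hVW : EpiConvergesOn X V W) :
    Tendsto (fun ν => bop Y β (φν ν) (V ν) x ω) atTop (𝓝 (bop Y β φ W x ω)) :=
  tendsto_biInf_of_isCompact hYc
    (fun _ hy _ ha => (hφe.eventually_lt_coe_add_coe_mul hβ hVW (hYX hy) ha).filter_mono
      (prod_mono_right _ (nhdsWithin_mono _ hYX)))
    fun y hy => tendsto_coe_add_coe_mul β (hφp y (hYX hy))
      (hV.tendsto_of_epiConvergesOn hVW (hYX hy))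

/-! ### Integrals of extended-real-valued functions -/

lemma erealToENN_eq_toENNReal : erealToENN = EReal.toENNReal := rfl

lemma toReal_toENNReal_sub_toReal_toENNReal_neg (t : EReal) :
    t.toENNReal.toReal - (-t).toENNReal.toReal = t.toReal := by
  induction t with
  | bot => simp
  | top => simp
  | coe r =>
    rw [← EReal.coe_neg, EReal.real_coe_toENNReal, EReal.real_coe_toENNReal,
      ENNReal.toReal_ofReal', ENNReal.toReal_ofReal', max_zero_sub_max_neg_zero_eq_self,
      EReal.toReal_coe]

namespace EIntegrable

variable {Ω : Type*} [MeasurableSpace Ω] {P : Measure Ω} {g : Ω → EReal}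

lemma neg (h : EIntegrable P g) : EIntegrable P fun ω => -g ω :=
  ⟨continuous_neg.measurable.comp_aemeasurable h.1, h.2.2, by simpa only [neg_neg] using h.2.1⟩

lemma ae_ne_top (h : EIntegrable P g) : ∀ᵐ ω ∂P, g ω ≠ ⊤ := by
  filter_upwards [ae_lt_top' h.1.ereal_toENNReal h.2.1.ne] with ω hω htop
  simp [htop] at hω

lemma ae_ne_bot (h : EIntegrable P g) : ∀ᵐ ω ∂P, g ω ≠ ⊥ :=
  h.neg.ae_ne_top.mono fun ω hω hbot => hω (by rw [hbot, EReal.neg_bot])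

lemma integrable_toReal_toENNReal (h : EIntegrable P g) :
    Integrable (fun ω => (g ω).toENNReal.toReal) P :=
  integrable_toReal_of_lintegral_ne_top h.1.ereal_toENNReal h.2.1.ne

lemma integrable (h : EIntegrable P g) : Integrable (fun ω => (g ω).toReal) P := by
  simp_rw [← toReal_toENNReal_sub_toReal_toENNReal_neg]
  exact h.integrable_toReal_toENNReal.sub h.neg.integrable_toReal_toENNReal

lemma coe_integral_toReal_toENNReal (h : EIntegrable P g) :
    ((∫ ω, (g ω).toENNReal.toReal ∂P : ℝ) : EReal) = (∫⁻ ω, (g ω).toENNReal ∂P : ENNReal) := by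
  rw [integral_toReal h.1.ereal_toENNReal (ae_lt_top' h.1.ereal_toENNReal h.2.1.ne),
    ← erealToENN_eq_toENNReal, EReal.coe_ennreal_toReal h.2.1.ne]

lemma eintegral_eq (h : EIntegrable P g) : eintegral P g = (∫ ω, (g ω).toReal ∂P : ℝ) := by
  simp_rw [← toReal_toENNReal_sub_toReal_toENNReal_neg]
  rw [integral_sub h.integrable_toReal_toENNReal h.neg.integrable_toReal_toENNReal,
    EReal.coe_sub, h.coe_integral_toReal_toENNReal, h.neg.coe_integral_toReal_toENNReal,
    eintegral, erealToENN_eq_toENNReal]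

lemma comp_of_eq_or_eq_zero (h : EIntegrable P g) {T : EReal → EReal} (hT : Measurable T)
    (hT₀ : ∀ t, T t = t ∨ T t = 0) : EIntegrable P fun ω => T (g ω) := by
  refine ⟨hT.comp_aemeasurable h.1, (lintegral_mono fun ω => ?_).trans_lt h.2.1,
    (lintegral_mono fun ω => ?_).trans_lt h.2.2⟩ <;>
  rcases hT₀ (g ω) with hω | hω <;> simp [hω, erealToENN_eq_toENNReal]

protected lemma truncAbove (h : EIntegrable P g) (α : ℝ) : EIntegrable P (truncAbove g α) :=
  h.comp_of_eq_or_eq_zero (T := fun t => if (α : EReal) ≤ t then t else 0)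
    (Measurable.ite measurableSet_Ici measurable_id measurable_const) fun _ => ite_eq_or_eq ..

protected lemma truncBelow (h : EIntegrable P g) (α : ℝ) : EIntegrable P (truncBelow g α) :=
  h.comp_of_eq_or_eq_zero (T := fun t => if t ≤ (α : EReal) then t else 0)
    (Measurable.ite measurableSet_Iic measurable_id measurable_const) fun _ => ite_eq_or_eq ..

end EIntegrable

/-! ### Clamping -/

/-- The extended real `t` clamped to `[-M, M]`, as a real number: the bounded continuous
truncation through which weak convergence is applied to unbounded integrands. -/
def clampE (M : ℝ) (t : EReal) : ℝ := (max ((-M : ℝ) : EReal) (min (M : EReal) t)).toReal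

lemma continuous_clampE (M : ℝ) : Continuous (clampE M) := by
  refine EReal.continuousOn_toReal.comp_continuous (by fun_prop) fun t => ?_
  rintro (hbot | htop)
  · exact ((EReal.bot_lt_coe _).trans_le (le_max_left _ _)).ne' hbot
  · exact (max_lt (EReal.coe_lt_top _) ((min_le_left _ _).trans_lt (EReal.coe_lt_top _))).ne htop

lemma clampE_coe (M r : ℝ) : clampE M r = max (-M) (min M r) := by
  rw [clampE, ← EReal.coe_strictMono.monotone.map_min, ← EReal.coe_strictMono.monotone.map_max,
    EReal.toReal_coe]

lemma coe_clampE (M : ℝ) (t : EReal) :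
    (clampE M t : EReal) = max ((-M : ℝ) : EReal) (min (M : EReal) t) :=
  EReal.coe_toReal
    (max_lt (EReal.coe_lt_top _) ((min_le_left _ _).trans_lt (EReal.coe_lt_top _))).ne
    ((EReal.bot_lt_coe _).trans_le (le_max_left _ _)).ne'

lemma abs_clampE_le {M : ℝ} (hM : 0 ≤ M) (t : EReal) : |clampE M t| ≤ M := by
  rw [abs_le, ← EReal.coe_le_coe_iff, ← EReal.coe_le_coe_iff (y := M), coe_clampE]
  exact ⟨le_max_left _ _,
    max_le (EReal.coe_le_coe_iff.2 (neg_le_self hM)) (min_le_left _ _)⟩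

lemma abs_clampE_coe_le_abs {M : ℝ} (hM : 0 ≤ M) (r : ℝ) : |clampE M r| ≤ |r| := by
  rw [clampE_coe, abs_le]
  exact ⟨le_max_of_le_right (le_min (by linarith [abs_nonneg r]) (neg_abs_le r)),
    max_le (by linarith [abs_nonneg r]) ((min_le_right _ _).trans (le_abs_self r))⟩

lemma clampE_coe_of_abs_le {M r : ℝ} (h : |r| ≤ M) : clampE M r = r := by
  rw [clampE_coe, min_eq_right (abs_le.1 h).2, max_eq_right (abs_le.1 h).1]

lemma sub_clampE_coe_le {M : ℝ} (hM : 0 ≤ M) (r : ℝ) :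
    r - clampE M r ≤ if M ≤ r then r else 0 := by
  rw [clampE_coe]
  split_ifs with h
  · linarith [le_max_of_le_right (b := -M) (le_min hM (hM.trans h))]
  · linarith [min_eq_right (not_le.1 h).le, le_max_right (-M) (min M r)]

lemma le_sub_clampE_coe {M : ℝ} (hM : 0 ≤ M) (r : ℝ) :
    (if r ≤ -M then r else 0) ≤ r - clampE M r := by
  rw [clampE_coe]
  split_ifs with h
  · linarith [max_le (le_refl (-M)) ((min_le_right M r).trans h)]
  · linarith [max_le (not_le.1 h).le (min_le_right M r)]

section Clamp

variable {Ω : Type*} [MeasurableSpace Ω] {P : Measure Ω} {g : Ω → EReal} {M : ℝ}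

lemma aestronglyMeasurable_clampE (hg : AEMeasurable g P) (M : ℝ) :
    AEStronglyMeasurable (fun ω => clampE M (g ω)) P :=
  ((continuous_clampE M).measurable.comp_aemeasurable hg).aestronglyMeasurable

lemma integrable_clampE [IsFiniteMeasure P] (hg : AEMeasurable g P) (hM : 0 ≤ M) :
    Integrable (fun ω => clampE M (g ω)) P :=
  .of_bound (aestronglyMeasurable_clampE hg M) M (.of_forall fun _ => abs_clampE_le hM _)

namespace EIntegrable

lemma integral_sub_integral_clampE_le [IsFiniteMeasure P] (hg : EIntegrable P g) (hM : 0 ≤ M) :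
    ((∫ ω, (g ω).toReal ∂P - ∫ ω, clampE M (g ω) ∂P : ℝ) : EReal) ≤
      eintegral P (truncAbove g M) := by
  have hclamp := integrable_clampE hg.1 hM
  rw [(hg.truncAbove M).eintegral_eq, EReal.coe_le_coe_iff, ← integral_sub hg.integrable hclamp]
  refine integral_mono_ae (hg.integrable.sub hclamp) (hg.truncAbove M).integrable ?_
  filter_upwards [hg.ae_ne_top, hg.ae_ne_bot] with ω htop hbot
  simp only [truncAbove]
  lift g ω to ℝ using ⟨htop, hbot⟩ with r
  simpa [apply_ite EReal.toReal] using sub_clampE_coe_le hM r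

lemma le_integral_sub_integral_clampE [IsFiniteMeasure P] (hg : EIntegrable P g) (hM : 0 ≤ M) :
    eintegral P (truncBelow g (-M)) ≤
      ((∫ ω, (g ω).toReal ∂P - ∫ ω, clampE M (g ω) ∂P : ℝ) : EReal) := by
  have hclamp := integrable_clampE hg.1 hM
  rw [(hg.truncBelow (-M)).eintegral_eq, EReal.coe_le_coe_iff,
    ← integral_sub hg.integrable hclamp]
  refine integral_mono_ae (hg.truncBelow (-M)).integrable (hg.integrable.sub hclamp) ?_
  filter_upwards [hg.ae_ne_top, hg.ae_ne_bot] with ω htop hbot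
  simp only [truncBelow]
  lift g ω to ℝ using ⟨htop, hbot⟩ with r
  simpa only [EReal.coe_le_coe_iff, apply_ite EReal.toReal, EReal.toReal_coe, EReal.toReal_zero]
    using le_sub_clampE_coe hM r

lemma tendsto_integral_clampE (hg : EIntegrable P g) :
    Tendsto (fun M : ℝ => ∫ ω, clampE M (g ω) ∂P) atTop (𝓝 (∫ ω, (g ω).toReal ∂P)) := by
  refine tendsto_integral_filter_of_dominated_convergence (fun ω => |(g ω).toReal|)
    (.of_forall fun M => aestronglyMeasurable_clampE hg.1 M) ?_ hg.integrable.abs ?_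
  · filter_upwards [eventually_ge_atTop 0] with M hM
    filter_upwards [hg.ae_ne_top, hg.ae_ne_bot] with ω htop hbot
    lift g ω to ℝ using ⟨htop, hbot⟩ with r
    exact abs_clampE_coe_le_abs hM r
  · filter_upwards [hg.ae_ne_top, hg.ae_ne_bot] with ω htop hbot
    lift g ω to ℝ using ⟨htop, hbot⟩ with r
    refine tendsto_const_nhds.congr' ?_
    filter_upwards [eventually_ge_atTop |r|] with M hM using (clampE_coe_of_abs_le hM).symm

end EIntegrable

end Clamp

/-- Tightness conditions (i) and (ii) on a sequence of integrands: every `g ν` is integrable, and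
the contributions to `∫ g ν` of the large positive and of the large negative values vanish
asymptotically. Each tail is bounded on one side only, the other side being automatic. -/
structure AsymptoticallyUniformIntegrable {Ω : Type*} [MeasurableSpace Ω] (μ : ℕ → Measure Ω)
    (g : ℕ → Ω → EReal) : Prop where
  integrable : ∀ ν, EIntegrable (μ ν) (g ν)
  above : ∀ ε : ℝ, 0 < ε → ∀ᶠ α : ℝ in atTop, ∀ᶠ ν in atTop,
    eintegral (μ ν) (truncAbove (g ν) α) < ε
  below : ∀ ε : ℝ, 0 < ε → ∀ᶠ α : ℝ in atBot, ∀ᶠ ν in atTop,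
    ((-ε : ℝ) : EReal) < eintegral (μ ν) (truncBelow (g ν) α)

namespace AsymptoticallyUniformIntegrable

variable {Ω : Type*} [MeasurableSpace Ω] {μ : ℕ → Measure Ω} [∀ ν, IsFiniteMeasure (μ ν)]
  {g : ℕ → Ω → EReal}

lemma eventually_abs_integral_sub_lt (hg : AsymptoticallyUniformIntegrable μ g) {ε : ℝ}
    (hε : 0 < ε) : ∀ᶠ M : ℝ in atTop, ∀ᶠ ν in atTop,
      |∫ ω, (g ν ω).toReal ∂μ ν - ∫ ω, clampE M (g ν ω) ∂μ ν| < ε := by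
  filter_upwards [hg.above ε hε, tendsto_neg_atTop_atBot.eventually (hg.below ε hε),
    eventually_ge_atTop 0] with M habove hbelow hM
  filter_upwards [habove, hbelow] with ν hνa hνb
  exact abs_lt.2
    ⟨EReal.coe_lt_coe_iff.1 (hνb.trans_le ((hg.integrable ν).le_integral_sub_integral_clampE hM)),
    EReal.coe_lt_coe_iff.1 (((hg.integrable ν).integral_sub_integral_clampE_le hM).trans_lt hνa)⟩

end AsymptoticallyUniformIntegrable

/-! ### Weak convergence with varying integrands -/

lemma WeakConv.tendsto_probabilityMeasure {Ω : Type*} [TopologicalSpace Ω] [MeasurableSpace Ω]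
    [OpensMeasurableSpace Ω] {P : Measure Ω} {Pν : ℕ → Measure Ω} [hP : IsProbabilityMeasure P]
    [hPν : ∀ ν, IsProbabilityMeasure (Pν ν)] (h : WeakConv Pν P) :
    Tendsto (β := ProbabilityMeasure Ω) (fun ν => ⟨Pν ν, hPν ν⟩) atTop (𝓝 ⟨P, hP⟩) :=
  ProbabilityMeasure.tendsto_iff_forall_integral_tendsto.2 fun f =>
    h f f.continuous ⟨‖f‖, f.norm_coe_le_norm⟩

namespace ConvergesContinuously

section Topological

variable {Ω T : Type*} [TopologicalSpace Ω] [TopologicalSpace T] {g : ℕ → Ω → T} {g₀ : Ω → T}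

lemma tendsto_apply (h : ConvergesContinuously g g₀) (ω : Ω) :
    Tendsto (fun ν => g ν ω) atTop (𝓝 (g₀ ω)) :=
  (h ω).comp (tendsto_id.prodMk tendsto_const_nhds)

protected lemma continuous [RegularSpace T] (h : ConvergesContinuously g g₀) : Continuous g₀ := by
  refine continuous_iff_continuousAt.2 fun ω =>
    (closed_nhds_basis (g₀ ω)).tendsto_right_iff.2 fun s ⟨hs, hsc⟩ => ?_
  have hev := (eventually_swap_iff.1 ((h ω).eventually hs)).curry
  exact hev.mono fun w hw => hsc.mem_of_tendsto (h.tendsto_apply w) hw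

lemma comp_continuous {S : Type*} [TopologicalSpace S] (h : ConvergesContinuously g g₀)
    {c : T → S} (hc : Continuous c) :
    ConvergesContinuously (fun ν ω => c (g ν ω)) fun ω => c (g₀ ω) :=
  fun ω => (hc.tendsto _).comp (h ω)

end Topological

variable {Ω : Type*} [TopologicalSpace Ω] [HasOuterApproxClosed Ω] [MeasurableSpace Ω]
  [OpensMeasurableSpace Ω] {P : ProbabilityMeasure Ω} {Pν : ℕ → ProbabilityMeasure Ω}

-- The closures of the sets where some later `g n` is still `ε`-far from `g₀` decrease to `∅`, so
-- one of them is `P`-small, and the portmanteau theorem transfers its smallness to `Pν ν`.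
lemma tendsto_measure_le_dist {T : Type*} [PseudoMetricSpace T] {g : ℕ → Ω → T} {g₀ : Ω → T}
    (h : ConvergesContinuously g g₀) (hP : Tendsto Pν atTop (𝓝 P)) {ε : ℝ} (hε : 0 < ε) :
    Tendsto (fun ν => (Pν ν : Measure Ω) {ω | ε ≤ dist (g ν ω) (g₀ ω)}) atTop (𝓝 0) := by
  let A : ℕ → Set Ω := fun k => {ω | ∃ ν ≥ k, ε ≤ dist (g ν ω) (g₀ ω)}
  have hanti : Antitone fun k => closure (A k) := fun j k hjk =>
    closure_mono fun ω ⟨ν, hν, hω⟩ => ⟨ν, hjk.trans hν, hω⟩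
  have hempty : ⋂ k, closure (A k) = ∅ := by
    refine eq_empty_of_forall_notMem fun ω hω => ?_
    have hdist : Tendsto (fun p : ℕ × Ω => dist (g p.1 p.2) (g₀ p.2)) (atTop ×ˢ 𝓝 ω) (𝓝 0) := by
      simpa only [dist_self, Function.comp_apply] using
        (h ω).dist ((h.continuous.tendsto ω).comp tendsto_snd)
    obtain ⟨pν, hpν, pω, hpω, hp⟩ := eventually_prod_iff.1 (hdist.eventually (gt_mem_nhds hε))
    obtain ⟨k, hk⟩ := eventually_atTop.1 hpν
    obtain ⟨w, ⟨ν, hν, hle⟩, hw⟩ :=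
      ((mem_closure_iff_frequently.1 (mem_iInter.1 hω k)).and_eventually hpω).exists
    exact (hp (hk ν hν) hw).not_ge hle
  have hlim : Tendsto (fun k => (P : Measure Ω) (closure (A k))) atTop (𝓝 0) := by
    simpa only [hempty, measure_empty, Function.comp_def] using tendsto_measure_iInter_atTop
      (fun k => isClosed_closure.nullMeasurableSet) hanti ⟨0, measure_ne_top (P : Measure Ω) _⟩
  refine ENNReal.tendsto_nhds_zero.2 fun δ hδ => ?_
  obtain ⟨k, hk⟩ := (hlim.eventually (gt_mem_nhds hδ)).exists
  filter_upwards [eventually_lt_of_limsup_lt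
    ((ProbabilityMeasure.limsup_measure_closed_le_of_tendsto hP isClosed_closure).trans_lt hk),
    eventually_ge_atTop k] with ν hν hkν
  have hsub : {ω | ε ≤ dist (g ν ω) (g₀ ω)} ⊆ closure (A k) :=
    fun ω hω => subset_closure ⟨ν, hkν, hω⟩
  exact (measure_mono hsub).trans hν.le

end ConvergesContinuously

lemma abs_integral_le_add_mul_measureReal {Ω : Type*} [MeasurableSpace Ω] {μ : Measure Ω}
    [IsProbabilityMeasure μ] {f : Ω → ℝ} (hf : AEStronglyMeasurable f μ) {M : ℝ}
    (hM : ∀ ω, |f ω| ≤ M) {ε : ℝ} (hε : 0 ≤ ε) :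
    |∫ ω, f ω ∂μ| ≤ ε + M * μ.real {ω | ε ≤ |f ω|} := by
  have hS : NullMeasurableSet {ω | ε ≤ |f ω|} μ :=
    nullMeasurableSet_le aemeasurable_const hf.aemeasurable.abs
  have hind : Integrable ({ω | ε ≤ |f ω|}.indicator fun _ => M) μ :=
    (integrable_const M).indicator₀ hS
  calc |∫ ω, f ω ∂μ| ≤ ∫ ω, |f ω| ∂μ := abs_integral_le_integral_abs
    _ ≤ ∫ ω, (ε + {ω | ε ≤ |f ω|}.indicator (fun _ => M) ω) ∂μ := by
        refine integral_mono (Integrable.of_bound hf M (.of_forall hM)).abs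
          ((integrable_const ε).add hind) fun ω => ?_
        by_cases hω : ε ≤ |f ω|
        · simpa [indicator_of_mem (show ω ∈ {ω | ε ≤ |f ω|} from hω)]
            using (hM ω).trans (le_add_of_nonneg_left hε)
        · simpa [hω] using (not_le.1 hω).le
    _ = ε + M * μ.real {ω | ε ≤ |f ω|} := by
        rw [integral_add (integrable_const ε) hind, integral_indicator₀ hS]
        simp [mul_comm]

section

variable {Ω : Type*} [TopologicalSpace Ω] [HasOuterApproxClosed Ω] [MeasurableSpace Ω]
  [OpensMeasurableSpace Ω] {P : Measure Ω} {Pν : ℕ → Measure Ω} [IsProbabilityMeasure P]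
  [∀ ν, IsProbabilityMeasure (Pν ν)]

lemma WeakConv.tendsto_integral_of_convergesContinuously (hP : WeakConv Pν P) {g : ℕ → Ω → ℝ}
    {g₀ : Ω → ℝ} (hg : ConvergesContinuously g g₀)
    (hgm : ∀ ν, AEStronglyMeasurable (g ν) (Pν ν)) {M : ℝ} (hM : ∀ ν ω, |g ν ω| ≤ M) :
    Tendsto (fun ν => ∫ ω, g ν ω ∂Pν ν) atTop (𝓝 (∫ ω, g₀ ω ∂P)) := by
  have hM₀ : ∀ ω, |g₀ ω| ≤ M := fun ω =>
    le_of_tendsto (hg.tendsto_apply ω).abs (.of_forall fun ν => hM ν ω)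
  have hg₀m : ∀ ν, AEStronglyMeasurable g₀ (Pν ν) := fun ν => hg.continuous.aestronglyMeasurable
  have hdiff : Tendsto (fun ν => ∫ ω, (g ν ω - g₀ ω) ∂Pν ν) atTop (𝓝 0) := by
    refine Metric.tendsto_nhds.2 fun ε hε => ?_
    have hbad : Tendsto (fun ν => (Pν ν).real {ω | ε / 2 ≤ |g ν ω - g₀ ω|}) atTop (𝓝 0) :=
      (ENNReal.tendsto_toReal ENNReal.zero_ne_top).comp
        (hg.tendsto_measure_le_dist hP.tendsto_probabilityMeasure (half_pos hε))
    have hbound : Tendsto (fun ν => ε / 2 + (M + M) * (Pν ν).real {ω | ε / 2 ≤ |g ν ω - g₀ ω|})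
        atTop (𝓝 (ε / 2)) := by simpa using (hbad.const_mul (M + M)).const_add (ε / 2)
    filter_upwards [hbound.eventually (gt_mem_nhds (half_lt_self hε))] with ν hν
    rw [Real.dist_0_eq_abs]
    exact (abs_integral_le_add_mul_measureReal ((hgm ν).sub (hg₀m ν))
      (fun ω => (abs_sub _ _).trans (add_le_add (hM ν ω) (hM₀ ω))) (half_pos hε).le).trans_lt hν
  refine (zero_add (∫ ω, g₀ ω ∂P) ▸ hdiff.add (hP g₀ hg.continuous ⟨M, hM₀⟩)).congr fun ν => ?_
  rw [integral_sub (.of_bound (hgm ν) M (.of_forall (hM ν)))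
    (.of_bound (hg₀m ν) M (.of_forall hM₀)), sub_add_cancel]

namespace AsymptoticallyUniformIntegrable

variable {g : ℕ → Ω → EReal}

lemma tendsto_eintegral (hg : AsymptoticallyUniformIntegrable Pν g) (hP : WeakConv Pν P)
    {g₀ : Ω → EReal} (hgg₀ : ConvergesContinuously g g₀) (hg₀ : EIntegrable P g₀) :
    Tendsto (fun ν => eintegral (Pν ν) (g ν)) atTop (𝓝 (eintegral P g₀)) := by
  simp_rw [fun ν => (hg.integrable ν).eintegral_eq, hg₀.eintegral_eq]
  refine EReal.tendsto_coe.2 (Metric.tendsto_nhds.2 fun ε hε => ?_)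
  have hε3 : 0 < ε / 3 := by positivity
  obtain ⟨M, hM, hM₀, hM_nonneg⟩ := ((hg.eventually_abs_integral_sub_lt hε3).and
    ((Metric.tendsto_nhds.1 hg₀.tendsto_integral_clampE _ hε3).and (eventually_ge_atTop 0))).exists
  have hclamp := hP.tendsto_integral_of_convergesContinuously
    (hgg₀.comp_continuous (continuous_clampE M))
    (fun ν => aestronglyMeasurable_clampE (hg.integrable ν).1 M)
    fun ν ω => abs_clampE_le hM_nonneg _
  filter_upwards [hM, Metric.tendsto_nhds.1 hclamp _ hε3] with ν hν hνclamp
  calc dist (∫ ω, (g ν ω).toReal ∂Pν ν) (∫ ω, (g₀ ω).toReal ∂P)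
      ≤ dist (∫ ω, (g ν ω).toReal ∂Pν ν) (∫ ω, clampE M (g ν ω) ∂Pν ν) +
          dist (∫ ω, clampE M (g ν ω) ∂Pν ν) (∫ ω, clampE M (g₀ ω) ∂P) +
          dist (∫ ω, clampE M (g₀ ω) ∂P) (∫ ω, (g₀ ω).toReal ∂P) := dist_triangle4 ..
    _ < ε / 3 + ε / 3 + ε / 3 := add_lt_add (add_lt_add hν hνclamp) hM₀
    _ = ε := add_thirds ε

end AsymptoticallyUniformIntegrable

end

lemma AsymptoticallyUniformIntegrable.exists_eventually_eintegral_le {Ω : Type*}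
    [MeasurableSpace Ω] {μ : ℕ → Measure Ω} [∀ ν, IsProbabilityMeasure (μ ν)] {g : ℕ → Ω → EReal}
    (hg : AsymptoticallyUniformIntegrable μ g) :
    ∃ C : ℝ, ∀ᶠ ν in atTop, eintegral (μ ν) (g ν) ≤ C := by
  obtain ⟨M, hM, hM_nonneg⟩ :=
    ((hg.eventually_abs_integral_sub_lt one_pos).and (eventually_ge_atTop 0)).exists
  refine ⟨M + 1, hM.mono fun ν hν => ?_⟩
  have hclamp : ∫ ω, clampE M (g ν ω) ∂μ ν ≤ M := by
    simpa using integral_mono (integrable_clampE (hg.integrable ν).1 hM_nonneg)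
      (integrable_const M) fun ω => (le_abs_self _).trans (abs_clampE_le hM_nonneg (g ν ω))
  rw [(hg.integrable ν).eintegral_eq, EReal.coe_le_coe_iff]
  linarith [(abs_lt.1 hν).2]

/-! ### Iterated limits -/

lemma limsupNu_eq_limsup (h : ℕ → EReal) : limsupNu h = limsup h atTop :=
  limsup_eq_iInf_iSup_of_nat.symm

lemma limsupAlphaTop_eq_limsup (G : ℝ → EReal) : limsupAlphaTop G = limsup G atTop := by
  rw [atTop_basis.limsup_eq_iInf_iSup]
  simp only [limsupAlphaTop, mem_Ici, iInf_true]

lemma liminfAlphaBot_eq_liminf (G : ℝ → EReal) : liminfAlphaBot G = liminf G atBot := by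
  rw [atBot_basis.liminf_eq_iSup_iInf]
  simp only [liminfAlphaBot, mem_Iic, iSup_true]

lemma liminfNuX_le_liminf {E : Type*} [PseudoMetricSpace E] {X : Set E} {x : E} (hx : x ∈ X)
    (h : ℕ → E → EReal) : liminfNuX X x h ≤ liminf (fun ν => h ν x) atTop := by
  refine iSup₂_le fun δ hδ => iSup_le fun N => le_liminf_of_le (by isBoundedDefault) ?_
  filter_upwards [eventually_ge_atTop N] with ν hν
  exact (iInf₂_le ν hν).trans ((iInf₂_le x hx).trans (iInf_le _ ((dist_self x).trans_le hδ.le)))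

lemma AsymptoticallyUniformIntegrable.of_limsup_le_of_le_liminf {Ω : Type*} [MeasurableSpace Ω]
    {μ : ℕ → Measure Ω} {g : ℕ → Ω → EReal} (hg : ∀ ν, EIntegrable (μ ν) (g ν))
    (habove : limsup (fun α : ℝ =>
      limsup (fun ν => eintegral (μ ν) (truncAbove (g ν) α)) atTop) atTop ≤ 0)
    (hbelow : 0 ≤ liminf (fun α : ℝ =>
      liminf (fun ν => eintegral (μ ν) (truncBelow (g ν) α)) atTop) atBot) :
    AsymptoticallyUniformIntegrable μ g where
  integrable := hg
  above ε hε := (eventually_lt_of_limsup_lt (habove.trans_lt (EReal.coe_pos.2 hε))).mono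
    fun _ hα => eventually_lt_of_limsup_lt hα
  below ε hε := (eventually_lt_of_lt_liminf
    ((EReal.coe_neg'.2 (neg_lt_zero.2 hε)).trans_le hbelow)).mono
    fun _ hα => eventually_lt_of_lt_liminf hα

/-! ### Fixed points of the Bellman operators -/

lemma EpiConvergesOn.slice {E Ω : Type*} [TopologicalSpace E] [TopologicalSpace Ω]
    {X : Set E} {φ : E → E → Ω → ℝ} {φν : ℕ → E → E → Ω → ℝ}
    (hφe : EpiConvergesOn (X ×ˢ X ×ˢ (univ : Set Ω)) (fun ν p => (φν ν p.1 p.2.1 p.2.2 : EReal))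
      fun p => (φ p.1 p.2.1 p.2.2 : EReal)) {x : E} (hx : x ∈ X) {ω : Ω}
    (hφp : ∀ y ∈ X, Tendsto (fun ν => φν ν x y ω) atTop (𝓝 (φ x y ω))) :
    EpiConvergesOn X (fun ν y => (φν ν x y ω : EReal)) fun y => (φ x y ω : EReal) := by
  refine fun y hy => ⟨fun ys hys hlim => ?_, fun _ => y, fun _ => hy, tendsto_const_nhds,
    (EReal.tendsto_coe.2 (hφp y hy)).limsup_eq.le⟩
  exact (hφe (x, y, ω) ⟨hx, hy, mem_univ ω⟩).1 (fun ν => (x, ys ν, ω))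
    (fun ν => ⟨hx, hys ν, mem_univ ω⟩)
    (tendsto_const_nhds.prodMk_nhds (hlim.prodMk_nhds tendsto_const_nhds))

lemma DlSeqClosed.mem_of_epiConvergesOn {E : Type*} [PseudoMetricSpace E] [ProperSpace E]
    {X : Set E} {zc : E × ℝ} {𝒱 : Set (E → EReal)} (h𝒱 : DlSeqClosed X zc 𝒱) (hX : IsClosed X)
    (h𝒱lsc : ∀ V ∈ 𝒱, LscFcnOn X V) {V : ℕ → E → EReal} (hV : ∀ ν, V ν ∈ 𝒱) {W : E → EReal}
    (hVW : EpiConvergesOn X V W) (hW : ∃ x ∈ X, W x ≠ ⊤) : W ∈ 𝒱 :=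
  h𝒱 V hV W ⟨hVW.lowerSemicontinuousOn, hW⟩ ((tendsto_awDist_iff_epiConvergesOn hX zc
    (fun ν => h𝒱lsc _ (hV ν)) ⟨hVW.lowerSemicontinuousOn, hW⟩).2 hVW)

/-- The solutions in `𝒱` of the Bellman equation `V = B(V)` on `X`, where
`B(V)(x) = ∫ b(V)(x,ξ) dP(ξ)`. -/
def bellmanFixedPoints {E Ω : Type*} [MeasurableSpace Ω] (X : Set E) (Y : E → Ω → Set E) (β : ℝ)
    (P : Measure Ω) (φ : E → E → Ω → ℝ) (𝒱 : Set (E → EReal)) : Set (E → EReal) :=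
  {W ∈ 𝒱 | ∀ x ∈ X, W x = eintegral P (bop Y β φ W x)}

/-- What conditions (i) and (ii) provide for a sequence `V` of value functions: `V` itself is
equi-lsc, and at each `x ∈ X` the integrands `b_ν(V_ν)(x,·)` are equi-continuous and
asymptotically uniformly integrable. -/
structure IsBellmanRegular {E Ω : Type*} [PseudoMetricSpace E] [PseudoMetricSpace Ω]
    [MeasurableSpace Ω] (X : Set E) (Y : E → Ω → Set E) (β : ℝ) (Pν : ℕ → Measure Ω)
    (φν : ℕ → E → E → Ω → ℝ) (V : ℕ → E → EReal) : Prop where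
  equiLscOn : EquiLscOn X V
  asymptoticallyUniformIntegrable : ∀ x ∈ X,
    AsymptoticallyUniformIntegrable Pν fun ν => bop Y β (φν ν) (V ν) x
  equiLscOn_bop : ∀ x ∈ X, EquiLscOn univ fun ν => bop Y β (φν ν) (V ν) x
  equiUscOn_bop : ∀ x ∈ X, EquiUscOn univ fun ν => bop Y β (φν ν) (V ν) x

section Bellman

variable {E Ω : Type*} [PseudoMetricSpace E] [PseudoMetricSpace Ω] [MeasurableSpace Ω]
  {X : Set E} {Y : E → Ω → Set E} {β : ℝ} {P : Measure Ω} {Pν : ℕ → Measure Ω}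
  {φ : E → E → Ω → ℝ} {φν : ℕ → E → E → Ω → ℝ} {V : ℕ → E → EReal} {W : E → EReal}

namespace IsBellmanRegular

lemma of_iterated_limits (hint : ∀ ν, ∀ x ∈ X, EIntegrable (Pν ν) (bop Y β (φν ν) (V ν) x))
    (hV : EquiLscOn X V)
    (hbelow : ∀ x ∈ X, liminfAlphaBot (fun α => liminfNuX X x fun ν x =>
      eintegral (Pν ν) (truncBelow (bop Y β (φν ν) (V ν) x) α)) = 0)
    (hlsc : EquiLscOn (X ×ˢ (univ : Set Ω)) fun ν p => bop Y β (φν ν) (V ν) p.1 p.2)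
    (habove : ∀ x ∈ X, limsupAlphaTop (fun α => limsupNu fun ν =>
      eintegral (Pν ν) (truncAbove (bop Y β (φν ν) (V ν) x) α)) = 0)
    (husc : ∀ x ∈ X, EquiUscOn univ fun ν => bop Y β (φν ν) (V ν) x) :
    IsBellmanRegular X Y β Pν φν V where
  equiLscOn := hV
  asymptoticallyUniformIntegrable x hx := by
    refine .of_limsup_le_of_le_liminf (fun ν => hint ν x hx) ?_ ?_
    · simpa only [limsupAlphaTop_eq_limsup, limsupNu_eq_limsup] using (habove x hx).le
    · rw [← hbelow x hx, liminfAlphaBot_eq_liminf]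
      exact liminf_le_liminf (.of_forall fun α => liminfNuX_le_liminf hx _)
  equiLscOn_bop _ hx := hlsc.prodMk_left hx
  equiUscOn_bop := husc

variable [∀ ν, IsProbabilityMeasure (Pν ν)] {x : E}

lemma ne_top_of_frequently_eq (hV : IsBellmanRegular X Y β Pν φν V) (hVW : EpiConvergesOn X V W)
    (hx : x ∈ X) (hfix : ∃ᶠ ν in atTop, V ν x = eintegral (Pν ν) (bop Y β (φν ν) (V ν) x)) :
    W x ≠ ⊤ := by
  obtain ⟨C, hC⟩ := (hV.asymptoticallyUniformIntegrable x hx).exists_eventually_eintegral_le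
  have hle : W x ≤ C := le_of_tendsto_of_frequently
    (hV.equiLscOn.tendsto_of_epiConvergesOn hVW hx)
    ((hfix.and_eventually hC).mono fun ν hν => hν.1.trans_le hν.2)
  exact ne_top_of_le_ne_top (EReal.coe_ne_top C) hle

variable [OpensMeasurableSpace Ω] [IsProbabilityMeasure P]

lemma tendsto_eintegral_bop (hV : IsBellmanRegular X Y β Pν φν V) (hβ : 0 ≤ β)
    (hP : WeakConv Pν P) (hx : x ∈ X) (hY : ∀ ω, IsCompact (Y x ω) ∧ Y x ω ⊆ X)
    (hφe : ∀ ω, EpiConvergesOn X (fun ν y => (φν ν x y ω : EReal)) fun y => (φ x y ω : EReal))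
    (hφp : ∀ y ∈ X, ∀ ω, Tendsto (fun ν => φν ν x y ω) atTop (𝓝 (φ x y ω)))
    (hVW : EpiConvergesOn X V W) (hW : EIntegrable P (bop Y β φ W x)) :
    Tendsto (fun ν => eintegral (Pν ν) (bop Y β (φν ν) (V ν) x)) atTop
      (𝓝 (eintegral P (bop Y β φ W x))) :=
  (hV.asymptoticallyUniformIntegrable x hx).tendsto_eintegral hP
    ((hV.equiLscOn_bop x hx).convergesContinuously (hV.equiUscOn_bop x hx) fun ω =>
      tendsto_bop hβ (hY ω).1 (hY ω).2 (hφe ω) (fun y hy => hφp y hy ω) hV.equiLscOn hVW) hW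

end IsBellmanRegular

variable [ProperSpace E] [OpensMeasurableSpace Ω] [IsProbabilityMeasure P]
  [∀ ν, IsProbabilityMeasure (Pν ν)] {zc : E × ℝ} {𝒱 : Set (E → EReal)}

lemma mem_bellmanFixedPoints_of_frequently (hX : IsClosed X) (hβ : 0 ≤ β)
    (hY : ∀ x ∈ X, ∀ ω, IsCompact (Y x ω) ∧ Y x ω ⊆ X) (h𝒱lsc : ∀ V ∈ 𝒱, LscFcnOn X V)
    (h𝒱 : DlSeqClosed X zc 𝒱) (hint : ∀ V ∈ 𝒱, ∀ x ∈ X, EIntegrable P (bop Y β φ V x))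
    (hP : WeakConv Pν P)
    (hφe : ∀ x ∈ X, ∀ ω,
      EpiConvergesOn X (fun ν y => (φν ν x y ω : EReal)) fun y => (φ x y ω : EReal))
    (hφp : ∀ x ∈ X, ∀ y ∈ X, ∀ ω, Tendsto (fun ν => φν ν x y ω) atTop (𝓝 (φ x y ω)))
    (hreg : IsBellmanRegular X Y β Pν φν V) (hV : ∀ ν, V ν ∈ 𝒱) (hVW : EpiConvergesOn X V W)
    (hfix : ∃ᶠ ν in atTop, V ν ∈ bellmanFixedPoints X Y β (Pν ν) (φν ν) 𝒱) :
    W ∈ bellmanFixedPoints X Y β P φ 𝒱 := by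
  have hfix' : ∀ x ∈ X, ∃ᶠ ν in atTop, V ν x = eintegral (Pν ν) (bop Y β (φν ν) (V ν) x) :=
    fun x hx => hfix.mono fun ν hν => hν.2 x hx
  obtain ⟨x₀, hx₀, -⟩ := (h𝒱lsc _ (hV 0)).2
  have hW : W ∈ 𝒱 := h𝒱.mem_of_epiConvergesOn hX h𝒱lsc hV hVW
    ⟨x₀, hx₀, hreg.ne_top_of_frequently_eq hVW hx₀ (hfix' x₀ hx₀)⟩
  refine ⟨hW, fun x hx => tendsto_nhds_unique_of_frequently_eq
    (hreg.equiLscOn.tendsto_of_epiConvergesOn hVW hx) ?_ (hfix' x hx)⟩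
  exact hreg.tendsto_eintegral_bop hβ hP hx (hY x hx) (hφe x hx) (hφp x hx) hVW (hint W hW x hx)

theorem infinite_horizon_consistency_general (hX : IsClosed X) (hβ : 0 ≤ β)
    (hY : ∀ x ∈ X, ∀ ω, IsCompact (Y x ω) ∧ Y x ω ⊆ X) (h𝒱lsc : ∀ V ∈ 𝒱, LscFcnOn X V)
    (h𝒱 : DlSeqClosed X zc 𝒱) (hint : ∀ V ∈ 𝒱, ∀ x ∈ X, EIntegrable P (bop Y β φ V x))
    (hP : WeakConv Pν P)
    (hφe : ∀ x ∈ X, ∀ ω,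
      EpiConvergesOn X (fun ν y => (φν ν x y ω : EReal)) fun y => (φ x y ω : EReal))
    (hφp : ∀ x ∈ X, ∀ y ∈ X, ∀ ω, Tendsto (fun ν => φν ν x y ω) atTop (𝓝 (φ x y ω)))
    (hreg : ∀ V : ℕ → E → EReal, (∀ ν, V ν ∈ 𝒱) → (∃ W, EpiConvergesOn X V W) →
      IsBellmanRegular X Y β Pν φν V) :
    EpiOuterLimit X (fun ν => bellmanFixedPoints X Y β (Pν ν) (φν ν) 𝒱) ⊆
      bellmanFixedPoints X Y β P φ 𝒱 ∧
    (DlSeqCompact X zc 𝒱 →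
      ∀ V : ℕ → E → EReal, (∀ ν, V ν ∈ bellmanFixedPoints X Y β (Pν ν) (φν ν) 𝒱) →
      (∀ W, (∃ ψ : ℕ → ℕ, StrictMono ψ ∧ EpiConvergesOn X (fun κ => V (ψ κ)) W) →
        W ∈ bellmanFixedPoints X Y β P φ 𝒱) ∧
      (bellmanFixedPoints X Y β P φ 𝒱).Nonempty) := by
  have houter : EpiOuterLimit X (fun ν => bellmanFixedPoints X Y β (Pν ν) (φν ν) 𝒱) ⊆
      bellmanFixedPoints X Y β P φ 𝒱 := by
    rintro W ⟨ψ, hψ, s, hs, hsW⟩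
    -- `s ∘ k` is a full sequence in `𝒱`, to which `hreg` applies, and its subsequence along `ψ`
    -- is `s`.
    obtain ⟨k, hkψ, hk⟩ := exists_leftInverse_tendsto_atTop hψ.injective
    have hs𝒱 : ∀ ν, s (k ν) ∈ 𝒱 := fun ν => (hs (k ν)).1
    have hkW := hsW.comp_tendsto hk
    refine mem_bellmanFixedPoints_of_frequently hX hβ hY h𝒱lsc h𝒱 hint hP hφe hφp
      (hreg _ hs𝒱 ⟨W, hkW⟩) hs𝒱 hkW (hψ.tendsto_atTop.frequently (.of_forall fun κ => ?_))
    rw [hkψ κ]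
    exact hs κ
  refine ⟨houter, fun hcompact V hV => ?_⟩
  have hcluster : ∀ W, (∃ ψ : ℕ → ℕ, StrictMono ψ ∧ EpiConvergesOn X (fun κ => V (ψ κ)) W) →
      W ∈ bellmanFixedPoints X Y β P φ 𝒱 :=
    fun W ⟨ψ, hψ, hVW⟩ => houter ⟨ψ, hψ, fun κ => V (ψ κ), fun κ => hV (ψ κ), hVW⟩
  obtain ⟨W, hW, ψ, hψ, hdist⟩ := hcompact V fun ν => (hV ν).1
  exact ⟨hcluster, W, hcluster W ⟨ψ, hψ, (tendsto_awDist_iff_epiConvergesOn hX zc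
    (fun κ => h𝒱lsc _ (hV (ψ κ)).1) (h𝒱lsc W hW)).1 hdist⟩⟩

end Bellman

/-- Infinite-horizon consistency of stochastic dynamic programming. -/
theorem infinite_horizon_consistency {n m : ℕ}
    (X : Set (EuclideanSpace ℝ (Fin n))) (hX : IsClosed X)
    (Ξ : Set (EuclideanSpace ℝ (Fin m))) (hΞ : IsClosed Ξ)
    (Y : EuclideanSpace ℝ (Fin n) → Ξ → Set (EuclideanSpace ℝ (Fin n)))
    (hY : ∀ x ∈ X, ∀ ξ : Ξ, (Y x ξ).Nonempty ∧ IsCompact (Y x ξ) ∧ Y x ξ ⊆ X)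
    (β : ℝ) (hβ : β ∈ Set.Ioo (0 : ℝ) 1)
    (φ : EuclideanSpace ℝ (Fin n) → EuclideanSpace ℝ (Fin n) → Ξ → ℝ)
    (φν : ℕ → EuclideanSpace ℝ (Fin n) → EuclideanSpace ℝ (Fin n) → Ξ → ℝ)
    (P : Measure Ξ) (Pν : ℕ → Measure Ξ)
    [IsProbabilityMeasure P] [∀ ν, IsProbabilityMeasure (Pν ν)]
    (zc : EuclideanSpace ℝ (Fin n) × ℝ)
    (𝒱 : Set (EuclideanSpace ℝ (Fin n) → EReal))
    (h𝒱lsc : ∀ V ∈ 𝒱, LscFcnOn X V)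
    -- Assumption 2
    (hA2 : ∀ V ∈ 𝒱, (∀ x ∈ X, EIntegrable P (bop Y β φ V x)) ∧
      (fun x => eintegral P (bop Y β φ V x)) ∈ 𝒱)
    (hA2ν : ∀ ν, ∀ V ∈ 𝒱, (∀ x ∈ X, EIntegrable (Pν ν) (bop Y β (φν ν) V x)) ∧
      (fun x => eintegral (Pν ν) (bop Y β (φν ν) V x)) ∈ 𝒱)
    -- 𝒱 is closed under the Attouch–Wets distance
    (h𝒱closed : DlSeqClosed X zc 𝒱)
    -- convergence of the data
    (hweak : WeakConv Pν P)
    (hφe : EpiConvergesOn (X ×ˢ X ×ˢ (univ : Set Ξ))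
      (fun ν p => ((φν ν p.1 p.2.1 p.2.2 : ℝ) : EReal))
      (fun p => ((φ p.1 p.2.1 p.2.2 : ℝ) : EReal)))
    (hφp : ∀ x ∈ X, ∀ y ∈ X, ∀ ξ : Ξ,
      Tendsto (fun ν => φν ν x y ξ) atTop (𝓝 (φ x y ξ)))
    -- every epi-convergent sequence in 𝒱 is equi-lsc and satisfies (i) and (ii)
    (hequi : ∀ Vs : ℕ → (EuclideanSpace ℝ (Fin n) → EReal),
      (∀ ν, Vs ν ∈ 𝒱) → (∃ W, EpiConvergesOn X Vs W) →
      EquiLscOn X Vs ∧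
      (∀ xb ∈ X, liminfAlphaBot (fun α => liminfNuX X xb (fun ν x =>
        eintegral (Pν ν) (truncBelow (bop Y β (φν ν) (Vs ν) x) α))) = 0) ∧
      (∀ ν, LowerSemicontinuousOn
        (fun p : EuclideanSpace ℝ (Fin n) × Ξ => bop Y β (φν ν) (Vs ν) p.1 p.2)
        (X ×ˢ (univ : Set Ξ))) ∧
      EquiLscOn (X ×ˢ (univ : Set Ξ)) (fun ν p => bop Y β (φν ν) (Vs ν) p.1 p.2) ∧
      (∀ xb ∈ X,
        limsupAlphaTop (fun α => limsupNu (fun ν =>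
          eintegral (Pν ν) (truncAbove (bop Y β (φν ν) (Vs ν) xb) α))) = 0 ∧
        (∀ ν, UpperSemicontinuous (fun ξ : Ξ => bop Y β (φν ν) (Vs ν) xb ξ)) ∧
        EquiUscOn (univ : Set Ξ) (fun ν ξ => bop Y β (φν ν) (Vs ν) xb ξ))) :
    EpiOuterLimit X (fun ν =>
        {W ∈ 𝒱 | ∀ x ∈ X, W x = eintegral (Pν ν) (bop Y β (φν ν) W x)}) ⊆
      {W ∈ 𝒱 | ∀ x ∈ X, W x = eintegral P (bop Y β φ W x)} ∧
    (DlSeqCompact X zc 𝒱 →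
      ∀ Vs : ℕ → (EuclideanSpace ℝ (Fin n) → EReal),
      (∀ ν, Vs ν ∈ 𝒱 ∧ ∀ x ∈ X, Vs ν x = eintegral (Pν ν) (bop Y β (φν ν) (Vs ν) x)) →
      (∀ W, (∃ φ' : ℕ → ℕ, StrictMono φ' ∧ EpiConvergesOn X (fun κ => Vs (φ' κ)) W) →
        W ∈ 𝒱 ∧ ∀ x ∈ X, W x = eintegral P (bop Y β φ W x)) ∧
      ∃ W ∈ 𝒱, ∀ x ∈ X, W x = eintegral P (bop Y β φ W x)) := by
  have hreg : ∀ V : ℕ → EuclideanSpace ℝ (Fin n) → EReal, (∀ ν, V ν ∈ 𝒱) →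
      (∃ W, EpiConvergesOn X V W) → IsBellmanRegular X Y β Pν φν V := by
    intro V hV hVW
    obtain ⟨hVlsc, hbelow, -, hlsc, habove⟩ := hequi V hV hVW
    exact .of_iterated_limits (fun ν => (hA2ν ν (V ν) (hV ν)).1) hVlsc hbelow hlsc
      (fun x hx => (habove x hx).1) fun x hx => (habove x hx).2.2
  exact infinite_horizon_consistency_general hX hβ.1.le (fun x hx ξ => (hY x hx ξ).2) h𝒱lsc
    h𝒱closed (fun V hV => (hA2 V hV).1) hweak
    (fun x hx ξ => hφe.slice hx fun y hy => hφp x hx y hy ξ) hφp hreg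

end
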